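/- Norm equivalence for the piecewise affine interpolation: for every 1 ≤ p < ∞ there are constants c, C > 0 (depending only on p, d and A) such that for every intact cell Q = Q_ε(x̄) one has (i) c · dist^p(∇̄y|_Q, SO̅(d)) ≤ (1/|Q|)∫_Q dist^p(∇ỹ, SO(d)) ≤ C · dist^p(∇̄y|_Q, SO̅(d)) and (ii) c · |∇̄y|_Q|^p ≤ (1/|Q|)∫_Q |∇ỹ|^p ≤ C · |∇̄y|_Q|^p. -/

import Mathlib

open scoped BigOperators ENNReal Pointwise
open MeasureTheory Filter Set

attribute [local instance] Classical.propDecidable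

noncomputable section

namespace Cleavage

/-- `ℝ^{d × 2^d}`: matrices whose columns are indexed by the corner bit-vectors of a cell. -/
abbrev CellMat (d : ℕ) := Fin d → (Fin d → Bool) → ℝ

/-- Euclidean norm on `ℝ^n`. -/
def eunorm {n : ℕ} (v : Fin n → ℝ) : ℝ := Real.sqrt (∑ i, v i ^ 2)

/-- Frobenius (Euclidean) norm on `ℝ^{d×2^d}`. -/
def mnorm {d : ℕ} (G : CellMat d) : ℝ := Real.sqrt (∑ j, ∑ b, G j b ^ 2)

/-- corner of the reference cube `[-1/2,1/2)^d` indexed by a bit-vector. -/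
def cornerVec {d : ℕ} (b : Fin d → Bool) : Fin d → ℝ := fun i => if b i then 1 / 2 else -(1 / 2)

/-- the matrix `Z` whose columns are the corners `z_i = A·(±1/2,…,±1/2)` of the reference cell. -/
def Zmat (d : ℕ) (A : Matrix (Fin d) (Fin d) ℝ) : CellMat d := fun j b => A.mulVec (cornerVec b) j

/-- `R ∈ SO(d)`. -/
def IsSO {d : ℕ} (R : Matrix (Fin d) (Fin d) ℝ) : Prop := R.transpose * R = 1 ∧ R.det = 1

/-- the product `R G` of a `d×d` matrix with an element of `ℝ^{d×2^d}`. -/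
def rotCell {d : ℕ} (R : Matrix (Fin d) (Fin d) ℝ) (G : CellMat d) : CellMat d :=
  fun j b => ∑ i, R j i * G i b

/-- `F · Z`. -/
def matZ (d : ℕ) (A F : Matrix (Fin d) (Fin d) ℝ) : CellMat d := rotCell F (Zmat d A)

/-- the translation `(c,…,c)`. -/
def transCell {d : ℕ} (c : Fin d → ℝ) : CellMat d := fun j _ => c j

/-- `SO̅(d) = { R Z : R ∈ SO(d) }`. -/
def SObar (d : ℕ) (A : Matrix (Fin d) (Fin d) ℝ) : Set (CellMat d) :=
  {G | ∃ R : Matrix (Fin d) (Fin d) ℝ, IsSO R ∧ G = rotCell R (Zmat d A)}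

/-- Euclidean distance of `G` to `SO̅(d)`. -/
def distSObar (d : ℕ) (A : Matrix (Fin d) (Fin d) ℝ) (G : CellMat d) : ℝ :=
  sInf {t | ∃ H ∈ SObar d A, t = mnorm (G - H)}

/-- `G ⊥ V₀`, i.e. the columns of `G` sum to zero. -/
def PerpTrans {d : ℕ} (G : CellMat d) : Prop := ∀ j, ∑ b, G j b = 0

/-- Frobenius inner product. -/
def frobInner {d : ℕ} (G H : CellMat d) : ℝ := ∑ j, ∑ b, G j b * H j b

/-- the quadratic form `Q_cell(G) = D²W_cell(Z)[G,G]`. -/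
def Qcell (d : ℕ) (A : Matrix (Fin d) (Fin d) ℝ) (W : CellMat d → ℝ) (G : CellMat d) : ℝ :=
  iteratedFDeriv ℝ 2 W (Zmat d A) ![G, G]

/-- Assumption (i): frame indifference. -/
def FrameIndiff (d : ℕ) (W : CellMat d → ℝ) : Prop :=
  ∀ (G : CellMat d) (R : Matrix (Fin d) (Fin d) ℝ) (c : Fin d → ℝ),
    IsSO R → W (rotCell R G + transCell c) = W G

/-- Assumption (ii): the zero set of the energy. -/
def MinimalOnSO (d : ℕ) (A : Matrix (Fin d) (Fin d) ℝ) (W : CellMat d → ℝ) : Prop :=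
  ∀ G : CellMat d, W G = 0 ↔ ∃ R : Matrix (Fin d) (Fin d) ℝ, IsSO R ∧
    ∃ c : Fin d → ℝ, G = rotCell R (Zmat d A) + transCell c

/-- Assumption (iii), smoothness part: `W` continuous and `C²` near `SO̅(d)`. -/
def SmoothNearSO (d : ℕ) (A : Matrix (Fin d) (Fin d) ℝ) (W : CellMat d → ℝ) : Prop :=
  Continuous W ∧ ∃ U : Set (CellMat d), IsOpen U ∧ SObar d A ⊆ U ∧ ContDiffOn ℝ 2 W U

/-- Assumption (iii), positivity part: `Q_cell` positive definite orthogonally to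
translations and infinitesimal rotations. -/
def HessPosDef (d : ℕ) (A : Matrix (Fin d) (Fin d) ℝ) (W : CellMat d → ℝ) : Prop :=
  ∀ G : CellMat d, G ≠ 0 → (∀ c : Fin d → ℝ, frobInner G (transCell c) = 0) →
    (∀ H : Matrix (Fin d) (Fin d) ℝ, H.transpose = -H → frobInner G (rotCell H (Zmat d A)) = 0) →
    0 < Qcell d A W G

/-- a partition `𝒵 = 𝒵₁ ∪̇ … ∪̇ 𝒵ₙ` of the corners. -/
def IsCellPartition {d n : ℕ} (P : Fin n → Finset (Fin d → Bool)) : Prop :=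
  (∀ i, (P i).Nonempty) ∧ (∀ i j, i ≠ j → Disjoint (P i) (P j)) ∧
    Finset.univ.biUnion P = Finset.univ

/-- `(1/2) Σ_{i≠j} Σ_{z_s ∈ 𝒵ᵢ} Σ_{z_t ∈ 𝒵ⱼ} β(z_s,z_t)`. -/
def crossSum {d n : ℕ} (β : (Fin d → Bool) → (Fin d → Bool) → ℝ)
    (P : Fin n → Finset (Fin d → Bool)) : ℝ :=
  (1 / 2) * ∑ i, ∑ j, if i = j then 0 else ∑ s ∈ P i, ∑ t ∈ P j, β s t

/-- `M ≤ d(G;𝒵ᵢ,𝒵ⱼ)` for all `i ≠ j`. -/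
def Separated {d n : ℕ} (M : ℝ) (P : Fin n → Finset (Fin d → Bool)) (G : CellMat d) : Prop :=
  ∀ i j, i ≠ j → ∀ s ∈ P i, ∀ t ∈ P j, M ≤ eunorm (fun jj => G jj s - G jj t)

/-- `G[𝒵ᵢ]`. -/
def restrictCols {d n : ℕ} (P : Fin n → Finset (Fin d → Bool)) (G : CellMat d) (i : Fin n) :
    {b // b ∈ P i} → Fin d → ℝ := fun b jj => G jj b.1

/-- Assumption (iv): decomposition into pair interactions at large separation,
with the compatibility condition near `SO̅(d)`. -/
def PairDecomposition (d : ℕ) (A : Matrix (Fin d) (Fin d) ℝ) (W : CellMat d → ℝ)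
    (β : (Fin d → Bool) → (Fin d → Bool) → ℝ) : Prop :=
  ∀ (n : ℕ), 2 ≤ n → ∀ P : Fin n → Finset (Fin d → Bool), IsCellPartition P →
    ∃ Wc : (i : Fin n) → ({b // b ∈ P i} → Fin d → ℝ) → ℝ,
      (∀ i v, 0 ≤ Wc i v) ∧
      (∀ δ : ℝ, 0 < δ → ∃ M : ℝ, ∀ G : CellMat d, Separated M P G →
        |W G - ((∑ i, Wc i (restrictCols P G i)) + crossSum β P)| ≤ δ) ∧
      (∃ C, 0 < C ∧ ∃ U : Set (CellMat d), IsOpen U ∧ SObar d A ⊆ U ∧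
        ∀ H ∈ U, ∀ i, Wc i (restrictCols P H i) ≤ C * W H)

/-- the triple sum of assumption (iv) is strictly positive unless `n = 1`. -/
def CrossPos (d : ℕ) (β : (Fin d → Bool) → (Fin d → Bool) → ℝ) : Prop :=
  ∀ (n : ℕ), 2 ≤ n → ∀ P : Fin n → Finset (Fin d → Bool), IsCellPartition P → 0 < crossSum β P

def dotp {n : ℕ} (v w : Fin n → ℝ) : ℝ := ∑ i, v i * w i

/-- the set of interaction directions `𝒱 = A{-1,0,1}^d \ {0}`. -/
def Vfin (d : ℕ) (A : Matrix (Fin d) (Fin d) ℝ) : Finset (Fin d → ℝ) :=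
  ((Finset.univ : Finset (Fin d → Fin 3)).image fun t =>
    A.mulVec fun i => ((t i : ℕ) : ℝ) - 1).erase 0

/-- `(1/2) β(z_s,z_t) = 2^{k-d} β(ν)` whenever `z_s - z_t = ν`, `ν` having `k` non-zero entries. -/
def BetaNuCompat (d : ℕ) (A : Matrix (Fin d) (Fin d) ℝ)
    (β : (Fin d → Bool) → (Fin d → Bool) → ℝ) (βν : (Fin d → ℝ) → ℝ) : Prop :=
  ∀ s t : Fin d → Bool, s ≠ t →
    (1 / 2) * β s t =
      (2 : ℝ) ^ ((((Finset.univ.filter fun i => s i ≠ t i)).card : ℤ) - (d : ℤ)) *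
        βν (A.mulVec fun i => cornerVec s i - cornerVec t i)

/-- `β_A = min_{ξ ≠ 0} Σ_ν β(ν)|ν·ξ| / |e₁·ξ|`. -/
def betaA (d : ℕ) [NeZero d] (A : Matrix (Fin d) (Fin d) ℝ) (βν : (Fin d → ℝ) → ℝ) : ℝ :=
  sInf {q | ∃ ξ : Fin d → ℝ, ξ ≠ 0 ∧ ξ 0 ≠ 0 ∧
    q = (∑ ν ∈ Vfin d A, βν ν * |dotp ν ξ|) / |ξ 0|}

/-- `α_A`, characterized as the minimal value `Q̃(1)` of the reduced minimization problem. -/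
def alphaA (d : ℕ) [NeZero d] (A : Matrix (Fin d) (Fin d) ℝ) (W : CellMat d → ℝ) : ℝ :=
  sInf {q | ∃ G : Matrix (Fin d) (Fin d) ℝ, G 0 0 = 1 ∧
    q = Qcell d A W (matZ d A ((1 / 2 : ℝ) • (G + G.transpose)))}

def M1 (d : ℕ) (A : Matrix (Fin d) (Fin d) ℝ) (βν : (Fin d → ℝ) → ℝ) : ℝ :=
  sInf {m | ∃ ξ : Fin d → ℝ, eunorm ξ = 1 ∧ m = ∑ ν ∈ Vfin d A, βν ν * |dotp ν ξ|}

def M2 (d : ℕ) (A : Matrix (Fin d) (Fin d) ℝ) (βν : (Fin d → ℝ) → ℝ) : ℝ :=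
  sSup {m | ∃ ξ : Fin d → ℝ, eunorm ξ = 1 ∧ m = ∑ ν ∈ Vfin d A, βν ν * |dotp ν ξ|}

/-! lattice geometry: the (translated) lattice `ε(ρ + A(k + u))`. -/

def latPt (d : ℕ) (A : Matrix (Fin d) (Fin d) ℝ) (ε : ℝ) (rv : Fin d → ℝ) (k : Fin d → ℤ)
    (u : Fin d → ℝ) : Fin d → ℝ :=
  ε • A.mulVec fun i => rv i + (k i : ℝ) + u i

def cellCorner (d : ℕ) (A : Matrix (Fin d) (Fin d) ℝ) (ε : ℝ) (rv : Fin d → ℝ) (k : Fin d → ℤ)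
    (b : Fin d → Bool) : Fin d → ℝ :=
  latPt d A ε rv k fun i => if b i then 1 else 0

/-- the discrete gradient `∇̄y = ε⁻¹(y₁ - ȳ, …, y_{2^d} - ȳ)` on the cell with index `k`. -/
def dgrad (d : ℕ) (A : Matrix (Fin d) (Fin d) ℝ) (ε : ℝ) (rv : Fin d → ℝ)
    (y : (Fin d → ℝ) → Fin d → ℝ) (k : Fin d → ℤ) : CellMat d :=
  fun j b =>
    (y (cellCorner d A ε rv k b) j -
      (∑ b' : Fin d → Bool, y (cellCorner d A ε rv k b') j) / 2 ^ d) / ε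

/-- the piecewise affine interpolation on the reference cube `[0,1]^n`, obtained inductively
over face dimension through the barycenters of the faces.  On each simplex of the associated
barycentric decomposition it is the affine interpolation of the corner/barycenter values; it is
computed here radially from the barycenter. -/
def cubeInterp : (n : ℕ) → ((Fin n → Bool) → ℝ) → (Fin n → ℝ) → ℝ
  | 0, f, _ => f fun i => i.elim0
  | n + 1, f, x =>
    let c : ℝ := (∑ b : Fin (n + 1) → Bool, f b) / 2 ^ (n + 1)
    have h : ∃ i : Fin (n + 1), ∀ j : Fin (n + 1), |x j - 1 / 2| ≤ |x i - 1 / 2| :=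
      Finite.exists_max fun i => |x i - 1 / 2|
    let i0 := Classical.choose h
    let t := 2 * |x i0 - 1 / 2|
    if t = 0 then c
    else
      (1 - t) * c +
        t * cubeInterp n (fun bb => f (i0.insertNth (if (1 : ℝ) / 2 < x i0 then true else false) bb))
          (fun j => 1 / 2 + (x (i0.succAbove j) - 1 / 2) / t)

/-- the index of the lattice cell containing `x`. -/
def cellIndex (d : ℕ) (A : Matrix (Fin d) (Fin d) ℝ) (ε : ℝ) (rv : Fin d → ℝ)
    (x : Fin d → ℝ) : Fin d → ℤ :=
  fun i => ⌊(ε • A)⁻¹.mulVec x i - rv i⌋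

/-- the reference coordinate (in `[0,1)^d`) of `x` inside its cell. -/
def refCoord (d : ℕ) (A : Matrix (Fin d) (Fin d) ℝ) (ε : ℝ) (rv : Fin d → ℝ)
    (x : Fin d → ℝ) : Fin d → ℝ :=
  fun i => (ε • A)⁻¹.mulVec x i - rv i - (cellIndex d A ε rv x i : ℝ)

/-- a cell is intact if `diam{∇̄y, 𝒵} ≤ C_int`. -/
def IntactCell (d : ℕ) (A : Matrix (Fin d) (Fin d) ℝ) (ε : ℝ) (rv : Fin d → ℝ) (Cint : ℝ)
    (y : (Fin d → ℝ) → Fin d → ℝ) (k : Fin d → ℤ) : Prop :=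
  ∀ b b' : Fin d → Bool,
    eunorm (fun jj => y (cellCorner d A ε rv k b) jj - y (cellCorner d A ε rv k b') jj) ≤ Cint * ε

/-- the interpolation `ỹ`: the simplicial interpolation on intact cells; on broken cells,
componentwise the simplicial interpolation where `diam_i ≤ C_int` and the affine fallback
`ỹ^i(x) = y^i(z₁) + (x - z₁)_i` otherwise. -/
def tildey (d : ℕ) (A : Matrix (Fin d) (Fin d) ℝ) (ε : ℝ) (rv : Fin d → ℝ) (Cint : ℝ)
    (y : (Fin d → ℝ) → Fin d → ℝ) (x : Fin d → ℝ) : Fin d → ℝ := fun j =>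
  let k := cellIndex d A ε rv x
  if IntactCell d A ε rv Cint y k then
    cubeInterp d (fun b => y (cellCorner d A ε rv k b) j) (refCoord d A ε rv x)
  else if ∀ b b' : Fin d → Bool,
      |y (cellCorner d A ε rv k b) j - y (cellCorner d A ε rv k b') j| ≤ Cint * ε then
    cubeInterp d (fun b => y (cellCorner d A ε rv k b) j) (refCoord d A ε rv x)
  else
    y (cellCorner d A ε rv k fun _ => false) j + (x j - cellCorner d A ε rv k (fun _ => false) j)

/-- the mesoscopic exponent `s = (3d-1)/(3d)`. -/
def sExp (d : ℕ) : ℝ := (3 * d - 1) / (3 * d)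


/-! the mesoscopic cell `U_ε = (0,ℓ) × (0,w)^{d-1}` and its energies. -/

def Ubox (d : ℕ) [NeZero d] (ℓ w : ℝ) : Set (Fin d → ℝ) :=
  {x | x 0 ∈ Ioo 0 ℓ ∧ ∀ i : Fin d, i ≠ 0 → x i ∈ Ioo 0 w}

/-- inner cells: the closure of the cell is contained in `U_ε`. -/
def InnerCellM (d : ℕ) [NeZero d] (A : Matrix (Fin d) (Fin d) ℝ) (ε : ℝ) (rv : Fin d → ℝ)
    (ℓ w : ℝ) (k : Fin d → ℤ) : Prop :=
  ∀ u : Fin d → ℝ, (∀ i, u i ∈ Icc (0 : ℝ) 1) → latPt d A ε rv k u ∈ Ubox d ℓ w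

def tailCoords (d : ℕ) (x : Fin d → ℝ) : Fin (d - 1) → ℝ := fun i => x ⟨i.1 + 1, by omega⟩

def consd (d : ℕ) [NeZero d] (a : ℝ) (x' : Fin (d - 1) → ℝ) : Fin d → ℝ :=
  fun j => if h : (j : ℕ) = 0 then a else x' ⟨(j : ℕ) - 1, by omega⟩

/-- the boundary faces `{0,ℓ} × w·Ws`. -/
def FaceSet (d : ℕ) [NeZero d] (ℓ w : ℝ) (Ws : Set (Fin (d - 1) → ℝ)) : Set (Fin d → ℝ) :=
  {x | (x 0 = 0 ∨ x 0 = ℓ) ∧ tailCoords d x ∈ w • Ws}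

/-- cells whose closure meets the boundary faces `{0,ℓ} × w·Ws`. -/
def BoundaryCellM (d : ℕ) [NeZero d] (A : Matrix (Fin d) (Fin d) ℝ) (ε : ℝ) (rv : Fin d → ℝ)
    (ℓ w : ℝ) (Ws : Set (Fin (d - 1) → ℝ)) (k : Fin d → ℤ) : Prop :=
  ∃ u : Fin d → ℝ, (∀ i, u i ∈ Icc (0 : ℝ) 1) ∧ latPt d A ε rv k u ∈ FaceSet d ℓ w Ws

/-- `E(U_ε, y)`: sum of the cell energies over the inner cells plus one half of the sum over
the boundary cells. -/
def EnergyMeso (d : ℕ) [NeZero d] (A : Matrix (Fin d) (Fin d) ℝ) (Wcell : CellMat d → ℝ)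
    (ε : ℝ) (rv : Fin d → ℝ) (ℓ w : ℝ) (Ws : Set (Fin (d - 1) → ℝ))
    (y : (Fin d → ℝ) → Fin d → ℝ) : ℝ :=
  ε ^ (d - 1) *
    ((∑' k : Fin d → ℤ, if InnerCellM d A ε rv ℓ w k then Wcell (dgrad d A ε rv y k) else 0) +
      (1 / 2) * ∑' k : Fin d → ℤ,
        if BoundaryCellM d A ε rv ℓ w Ws k then Wcell (dgrad d A ε rv y k) else 0)

/-- a cell is `1`-broken if `diam₁{∇̄y, 𝒵} > C*_int`. -/
def OneBroken (d : ℕ) [NeZero d] (A : Matrix (Fin d) (Fin d) ℝ) (ε : ℝ) (rv : Fin d → ℝ)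
    (Cstar : ℝ) (y : (Fin d → ℝ) → Fin d → ℝ) (k : Fin d → ℤ) : Prop :=
  ∃ b b' : Fin d → Bool,
    Cstar * ε < |y (cellCorner d A ε rv k b) 0 - y (cellCorner d A ε rv k b') 0|

/-- the (half open) cell with index `k`. -/
def cellRegion (d : ℕ) (A : Matrix (Fin d) (Fin d) ℝ) (ε : ℝ) (rv : Fin d → ℝ)
    (k : Fin d → ℤ) : Set (Fin d → ℝ) :=
  {x | ∃ u : Fin d → ℝ, (∀ i, u i ∈ Ico (0 : ℝ) 1) ∧ x = latPt d A ε rv k u}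

/-- the averaged boundary condition
`(1/(w^{d-1}|W|)) ∫_{w·W} (ỹ¹(ℓ,x') - ỹ¹(0,x')) dx' = ℓ(1+r)`. -/
def AvgBC (d : ℕ) [NeZero d] (A : Matrix (Fin d) (Fin d) ℝ) (ε : ℝ) (rv : Fin d → ℝ)
    (Cstar ℓ w : ℝ) (Ws : Set (Fin (d - 1) → ℝ)) (y : (Fin d → ℝ) → Fin d → ℝ) (r : ℝ) : Prop :=
  (∫ x' in w • Ws,
      (tildey d A ε rv Cstar y (consd d ℓ x') 0 - tildey d A ε rv Cstar y (consd d 0 x') 0)) =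
    w ^ (d - 1) * (volume Ws).toReal * (ℓ * (1 + r))

/-- no `1`-broken cell meets the boundary faces `{0,ℓ} × w·W̃`. -/
def NoBrokenFace (d : ℕ) [NeZero d] (A : Matrix (Fin d) (Fin d) ℝ) (ε : ℝ) (rv : Fin d → ℝ)
    (Cstar ℓ w : ℝ) (Wts : Set (Fin (d - 1) → ℝ)) (y : (Fin d → ℝ) → Fin d → ℝ) : Prop :=
  ∀ k : Fin d → ℤ, OneBroken d A ε rv Cstar y k →
    cellRegion d A ε rv k ∩ FaceSet d ℓ w Wts = ∅

/-- the mesoscopic minimization problem `M(U_ε, r)`. -/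
def Mmeso (d : ℕ) [NeZero d] (A : Matrix (Fin d) (Fin d) ℝ) (Wcell : CellMat d → ℝ)
    (ε : ℝ) (rv : Fin d → ℝ) (Cstar ℓ w : ℝ) (Wts Ws : Set (Fin (d - 1) → ℝ)) (r : ℝ) : ℝ :=
  sInf {e | ∃ y : (Fin d → ℝ) → Fin d → ℝ,
    AvgBC d A ε rv Cstar ℓ w Ws y r ∧ NoBrokenFace d A ε rv Cstar ℓ w Wts y ∧
    e = EnergyMeso d A Wcell ε rv ℓ w Ws y}

def einfDist {n : ℕ} (x : Fin n → ℝ) (S : Set (Fin n → ℝ)) : ℝ :=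
  sInf {t | ∃ z ∈ S, t = eunorm fun i => x i - z i}

/-- the condition (W form): a connected subset of `(0,1)^{d-1}` of measure in `(1/2, 1]` whose
boundary has `H^{d-2}`-measure `< D`. -/
def WFormP (d : ℕ) (D : ℝ) (S : Set (Fin (d - 1) → ℝ)) : Prop :=
  (∀ x ∈ S, ∀ i, x i ∈ Ioo (0 : ℝ) 1) ∧ IsConnected S ∧
    1 / 2 < (volume S).toReal ∧ (volume S).toReal ≤ 1 ∧
    μH[(d : ℝ) - 2] (frontier S) < ENNReal.ofReal D

/-- the subset of `W̃` of points of distance `> D'ε^{1-s}` from `∂W̃`. -/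
def coreSet (d : ℕ) (D' ε : ℝ) (Wts : Set (Fin (d - 1) → ℝ)) : Set (Fin (d - 1) → ℝ) :=
  {x ∈ Wts | D' * ε ^ (1 - sExp d) < einfDist x (frontier Wts)}

/-- `W` is the connected component of largest Lebesgue measure of `coreSet`. -/
def LargestComp (d : ℕ) (D' ε : ℝ) (Wts Ws : Set (Fin (d - 1) → ℝ)) : Prop :=
  ∃ x₀ ∈ coreSet d D' ε Wts, Ws = connectedComponentIn (coreSet d D' ε Wts) x₀ ∧
    ∀ x ∈ coreSet d D' ε Wts, volume (connectedComponentIn (coreSet d D' ε Wts) x) ≤ volume Ws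

/-- the admissible pairs `(W̃, W)`. -/
def AdmissiblePair (d : ℕ) (D D' ε : ℝ) (Wts Ws : Set (Fin (d - 1) → ℝ)) : Prop :=
  WFormP d D Wts ∧ LargestComp d D' ε Wts Ws ∧ WFormP d D Ws

/-! the macroscopic body `Ω = (0,l₁) × … × (0,l_d)`. -/

def OmegaBox (d : ℕ) (l : Fin d → ℝ) : Set (Fin d → ℝ) := {x | ∀ i, x i ∈ Ioo 0 (l i)}

def InnerCellOmega (d : ℕ) (A : Matrix (Fin d) (Fin d) ℝ) (ε : ℝ) (l : Fin d → ℝ)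
    (k : Fin d → ℤ) : Prop :=
  ∀ u : Fin d → ℝ, (∀ i, u i ∈ Icc (0 : ℝ) 1) → latPt d A ε 0 k u ∈ OmegaBox d l

/-- the rescaled energy `𝓔_ε(y) = ε^{d-1} Σ_{inner cells} W_cell(∇̄y)`. -/
def EnergyOmega (d : ℕ) (A : Matrix (Fin d) (Fin d) ℝ) (Wcell : CellMat d → ℝ) (ε : ℝ)
    (l : Fin d → ℝ) (y : (Fin d → ℝ) → Fin d → ℝ) : ℝ :=
  ε ^ (d - 1) * ∑' k : Fin d → ℤ,
    if InnerCellOmega d A ε l k then Wcell (dgrad d A ε 0 y k) else 0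

/-- `l_A = Σ_j |v_j · e₁|`. -/
def lA (d : ℕ) [NeZero d] (A : Matrix (Fin d) (Fin d) ℝ) : ℝ := ∑ j, |A 0 j|

/-- the boundary condition of the class `𝒜(a_ε)`:
`y¹(x) = (1+a)x₁` for lattice points `x ∈ Ω` with `x₁ ≤ 2l_Aε` or `x₁ ≥ l₁ - 2l_Aε`. -/
def BdryCondA (d : ℕ) [NeZero d] (A : Matrix (Fin d) (Fin d) ℝ) (ε : ℝ) (l : Fin d → ℝ)
    (a : ℝ) (y : (Fin d → ℝ) → Fin d → ℝ) : Prop :=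
  ∀ k : Fin d → ℤ, latPt d A ε 0 k 0 ∈ OmegaBox d l →
    ((latPt d A ε 0 k 0) 0 ≤ 2 * lA d A * ε ∨ l 0 - 2 * lA d A * ε ≤ (latPt d A ε 0 k 0) 0) →
    y (latPt d A ε 0 k 0) 0 = (1 + a) * (latPt d A ε 0 k 0) 0

/-- `inf {𝓔_ε(y) : y ∈ 𝒜(a_ε)}`. -/
def minEnergy (d : ℕ) [NeZero d] (A : Matrix (Fin d) (Fin d) ℝ) (Wcell : CellMat d → ℝ)
    (ε : ℝ) (l : Fin d → ℝ) (a : ℝ) : ℝ :=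
  sInf {e | ∃ y : (Fin d → ℝ) → Fin d → ℝ,
    BdryCondA d A ε l a y ∧ e = EnergyOmega d A Wcell ε l y}

/-! helpers for the interpolation lemmas. -/

/-- the simplicial interpolation on the single cell with index `k`. -/
def cellInterp (d : ℕ) (A : Matrix (Fin d) (Fin d) ℝ) (ε : ℝ) (rv : Fin d → ℝ)
    (y : (Fin d → ℝ) → Fin d → ℝ) (k : Fin d → ℤ) (x : Fin d → ℝ) : Fin d → ℝ :=
  fun j => cubeInterp d (fun b => y (cellCorner d A ε rv k b) j)
    (fun i => (ε • A)⁻¹.mulVec x i - rv i - (k i : ℝ))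

/-- the gradient of a map `ℝ^d → ℝ^d` as a `d×d` array. -/
def gradM (d : ℕ) (f : (Fin d → ℝ) → Fin d → ℝ) (x : Fin d → ℝ) : Fin d → Fin d → ℝ :=
  fun j i => fderiv ℝ f x (Pi.single i 1) j

def sqnorm (d : ℕ) (F : Fin d → Fin d → ℝ) : ℝ := Real.sqrt (∑ j, ∑ i, F j i ^ 2)

/-- Euclidean distance of a `d×d` matrix to `SO(d)`. -/
def distSO (d : ℕ) (F : Fin d → Fin d → ℝ) : ℝ :=
  sInf {t | ∃ R : Matrix (Fin d) (Fin d) ℝ, IsSO R ∧ t = sqnorm d fun j i => F j i - R j i}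

/-- `∇̄y` as a (piecewise constant) function on `ℝ^d`. -/
def dgradFun (d : ℕ) (A : Matrix (Fin d) (Fin d) ℝ) (ε : ℝ) (rv : Fin d → ℝ)
    (y : (Fin d → ℝ) → Fin d → ℝ) (x : Fin d → ℝ) : CellMat d :=
  dgrad d A ε rv y (cellIndex d A ε rv x)

/-- the directional interpolation `ȳ_ν` on the cells `ε D^ν(λ + [0,1)^d)`. -/
def barInterp (d : ℕ) [NeZero d] (ε Cint : ℝ) (Dν : Matrix (Fin d) (Fin d) ℝ) (ν : Fin d → ℝ)
    (y : (Fin d → ℝ) → Fin d → ℝ) (x : Fin d → ℝ) : Fin d → ℝ :=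
  let u := (ε • Dν)⁻¹.mulVec x
  let x0 := ε • Dν.mulVec fun i => (⌊u i⌋ : ℝ)
  let x1 := fun i => x0 i + ε * ν i
  if eunorm (fun j => y x1 j - y x0 j) ≤ Cint * ε then
    fun j => (1 - (u 0 - (⌊u 0⌋ : ℝ))) * y x0 j + (u 0 - (⌊u 0⌋ : ℝ)) * y x1 j
  else y x0

end Cleavage

namespace Cleavage

/-!
In lattice coordinates the interpolation is affine on each of the `2ᵈ d!` simplices of the
barycentric decomposition of the unit cube, and its gradient there is linear in the discrete
gradient. The mean over a cell is therefore a sum over the simplices with fixed positive weights,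
and it is enough to compare distances and norms simplex by simplex.

The upper bounds hold because the gradient on a simplex is a bounded linear function of the discrete
gradient which maps `R Z` to `R`. For the lower bounds, the corner values relative to their mean can
be read off the gradients, because the segment from the center of the cell to a corner lies in one
of the simplices. This settles the norms. For the distances, the gradients on adjacent simplices
differ by a matrix `a ⊗ v` with `v` depending only on the simplices, and two rotations whose
difference is close to such a matrix are close to each other. Hence gradients which are all close
to rotations are close to a single rotation `R`, and the discrete gradient is close to `R Z`.
-/

section WeightedSum

variable {ι : Type*} [Fintype ι] {w : ι → ℝ} {p K : ℝ}

theorem exists_mul_rpow_le_sum [Nonempty ι] (hw : ∀ i, 0 < w i) (hp : 0 ≤ p) (hK : 0 < K) :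
    ∃ c > 0, ∀ (x : ℝ) (φ : ι → ℝ), 0 ≤ x → (∀ i, 0 ≤ φ i) → (∃ i, x ≤ K * φ i) →
      c * x ^ p ≤ ∑ i, w i * φ i ^ p := by
  obtain ⟨i₀, hi₀⟩ := Finite.exists_min w
  refine ⟨w i₀ / K ^ p, div_pos (hw i₀) (by positivity), fun x φ hx hφ ⟨i, hi⟩ ↦ ?_⟩
  calc w i₀ / K ^ p * x ^ p ≤ w i₀ / K ^ p * (K * φ i) ^ p := by
        gcongr
        exact div_nonneg (hw i₀).le (by positivity)
    _ = w i₀ * φ i ^ p := by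
        rw [Real.mul_rpow hK.le (hφ i)]
        field_simp
    _ ≤ w i * φ i ^ p := mul_le_mul_of_nonneg_right (hi₀ i) (Real.rpow_nonneg (hφ i) p)
    _ ≤ ∑ i, w i * φ i ^ p := Finset.single_le_sum
        (fun i _ ↦ mul_nonneg (hw i).le (Real.rpow_nonneg (hφ i) p)) (Finset.mem_univ i)

theorem exists_sum_le_mul_rpow [Nonempty ι] (hw : ∀ i, 0 < w i) (hp : 0 ≤ p) (hK : 0 < K) :
    ∃ C > 0, ∀ (x : ℝ) (φ : ι → ℝ), 0 ≤ x → (∀ i, 0 ≤ φ i) → (∀ i, φ i ≤ K * x) →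
      ∑ i, w i * φ i ^ p ≤ C * x ^ p := by
  refine ⟨(∑ i, w i) * K ^ p,
    mul_pos (Finset.sum_pos (fun i _ ↦ hw i) Finset.univ_nonempty) (by positivity),
    fun x φ hx hφ hle ↦ ?_⟩
  rw [mul_assoc, ← Real.mul_rpow hK.le hx, Finset.sum_mul]
  gcongr with i
  · exact (hw i).le
  · exact hφ i
  · exact hle i

end WeightedSum

section SpecialOrthogonal

open scoped Matrix Matrix.Norms.Frobenius

variable {d : ℕ} {R : Matrix (Fin d) (Fin d) ℝ}

theorem frobenius_norm_eq_sqrt {m n : Type*} [Fintype m] [Fintype n] (M : Matrix m n ℝ) :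
    ‖M‖ = √(∑ i, ∑ j, M i j ^ 2) := by
  simp [Matrix.frobenius_norm_def, Real.sqrt_eq_rpow]

theorem isSO_one : IsSO (1 : Matrix (Fin d) (Fin d) ℝ) := by simp [IsSO]

theorem IsSO.norm_eq (hR : IsSO R) : ‖R‖ = √d := by
  have htrace : ∑ i, ∑ j, R i j ^ 2 = (Rᵀ * R).trace := by
    simp only [Matrix.trace, Matrix.diag_apply, Matrix.mul_apply, Matrix.transpose_apply, sq]
    exact Finset.sum_comm
  rw [frobenius_norm_eq_sqrt, htrace, hR.1, Matrix.trace_one, Fintype.card_fin]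

theorem isCompact_setOf_isSO (d : ℕ) : IsCompact {R : Matrix (Fin d) (Fin d) ℝ | IsSO R} := by
  refine (isCompact_closedBall 0 √d).of_isClosed_subset ?_ fun R hR ↦ ?_
  · exact (isClosed_eq (by fun_prop) continuous_const).inter
      (isClosed_eq (Continuous.matrix_det continuous_id) continuous_const)
  · rw [mem_closedBall_zero_iff]
    exact (IsSO.norm_eq hR).le

theorem IsSO.det_updateRow (hR : IsSO R) (v : Fin d → ℝ) (i : Fin d) :
    (R.updateRow i v).det = (R *ᵥ v) i := by
  have hadj : R.adjugate = Rᵀ := by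
    have hinv : R⁻¹ = Rᵀ := Matrix.inv_eq_left_inv hR.1
    rw [← hinv, Matrix.inv_def, hR.2, Ring.inverse_one, one_smul]
  rw [← Matrix.cramer_transpose_apply, Matrix.cramer_eq_adjugate_mulVec,
    ← Matrix.adjugate_transpose, hadj, Matrix.transpose_transpose]

theorem det_updateRow_add_vecMulVec {n α : Type*} [Fintype n] [DecidableEq n] [CommRing α]
    (M : Matrix n n α) (a v : n → α) (i : n) :
    ((M + Matrix.vecMulVec a v).updateRow i v).det = (M.updateRow i v).det := by
  refine Matrix.det_eq_of_forall_row_eq_smul_add_const (Function.update a i 0) i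
    (Function.update_self i 0 a) fun k l ↦ ?_
  rcases eq_or_ne k i with rfl | hk
  · simp
  · simp [hk, Matrix.vecMulVec_apply]

theorem exists_lipschitzOnWith_det_updateRow (v : Fin d → ℝ) (r : ℝ) :
    ∃ L, LipschitzOnWith L
      (fun (M : Matrix (Fin d) (Fin d) ℝ) (i : Fin d) ↦ (M.updateRow i v).det)
      (Metric.closedBall 0 r) := by
  have hdiff : ContDiff ℝ 1
      (fun (M : Matrix (Fin d) (Fin d) ℝ) (i : Fin d) ↦ (M.updateRow i v).det) := by
    refine contDiff_pi.2 fun i ↦ ?_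
    simp only [Matrix.det_apply']
    refine ContDiff.sum fun σ _ ↦ contDiff_const.mul (contDiff_prod fun k _ ↦ ?_)
    rcases eq_or_ne (σ k) i with hk | hk
    · simp only [hk, Matrix.updateRow_self]
      exact contDiff_const
    · simp only [ne_eq, hk, not_false_eq_true, Matrix.updateRow_ne]
      exact (Matrix.entryLinearMap ℝ ℝ (σ k) k).toContinuousLinearMap.contDiff
  exact hdiff.contDiffOn.exists_lipschitzOnWith one_ne_zero (convex_closedBall _ _)
    (isCompact_closedBall _ _)

/- The cofactor matrix `cof F` satisfies `cof (F + a ⊗ v) v = cof F v`, and `cof R = R` for a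
rotation: if `R₁ = R₂ + E + a ⊗ v`, then `R₁ v = cof (R₂ + E) v` is close to `cof R₂ v = R₂ v`. -/
theorem exists_norm_mulVec_sub_le (v : Fin d → ℝ) :
    ∃ K : ℝ, 0 ≤ K ∧ ∀ R₁ R₂ : Matrix (Fin d) (Fin d) ℝ, IsSO R₁ → IsSO R₂ → ∀ a : Fin d → ℝ,
      ‖R₁ - R₂ - Matrix.vecMulVec a v‖ ≤ 1 →
      ‖R₁ *ᵥ v - R₂ *ᵥ v‖ ≤ K * ‖R₁ - R₂ - Matrix.vecMulVec a v‖ := by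
  obtain ⟨L, hL⟩ := exists_lipschitzOnWith_det_updateRow v (√d + 1)
  refine ⟨L, L.2, fun R₁ R₂ h₁ h₂ a hE ↦ ?_⟩
  set E := R₁ - R₂ - Matrix.vecMulVec a v with hE_def
  have hcof : R₁ *ᵥ v = fun i ↦ ((R₂ + E).updateRow i v).det := by
    ext i
    have hR : R₁ = R₂ + E + Matrix.vecMulVec a v := by rw [hE_def]; abel
    rw [← h₁.det_updateRow, hR, det_updateRow_add_vecMulVec]
  have hcof₂ : R₂ *ᵥ v = fun i ↦ (R₂.updateRow i v).det :=
    funext fun i ↦ (h₂.det_updateRow v i).symm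
  have hmem₂ : R₂ ∈ Metric.closedBall 0 (√d + 1) := by
    rw [mem_closedBall_zero_iff, h₂.norm_eq]; linarith
  have hmem : R₂ + E ∈ Metric.closedBall 0 (√d + 1) := by
    rw [mem_closedBall_zero_iff]
    exact (norm_add_le _ _).trans (add_le_add h₂.norm_eq.le hE)
  simpa [hcof, hcof₂, dist_eq_norm] using hL.dist_le_mul _ hmem _ hmem₂

theorem exists_norm_vecMulVec_le {m n : Type*} [Fintype m] [Fintype n] (v : n → ℝ) :
    ∃ N : ℝ, 0 < N ∧ ∀ a : m → ℝ, ‖Matrix.vecMulVec a v‖ ≤ N * ‖a‖ :=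
  let vecMulVecLinear : (m → ℝ) →ₗ[ℝ] Matrix m n ℝ :=
    { toFun := fun a ↦ Matrix.vecMulVec a v
      map_add' := fun a b ↦ Matrix.add_vecMulVec a b v
      map_smul' := fun c a ↦ Matrix.smul_vecMulVec c a v }
  vecMulVecLinear.toContinuousLinearMap.bound

theorem exists_norm_sub_le_of_norm_le_one {v : Fin d → ℝ} (hv : v ≠ 0) :
    ∃ K : ℝ, 0 ≤ K ∧ ∀ R₁ R₂ : Matrix (Fin d) (Fin d) ℝ, IsSO R₁ → IsSO R₂ → ∀ a : Fin d → ℝ,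
      ‖R₁ - R₂ - Matrix.vecMulVec a v‖ ≤ 1 →
      ‖R₁ - R₂‖ ≤ K * ‖R₁ - R₂ - Matrix.vecMulVec a v‖ := by
  obtain ⟨K, hK, hmulVec⟩ := exists_norm_mulVec_sub_le v
  obtain ⟨N, hN, hvecMulVec⟩ := exists_norm_vecMulVec_le (m := Fin d) v
  have hq : 0 < v ⬝ᵥ v := lt_of_le_of_ne
    (Finset.sum_nonneg fun i _ ↦ mul_self_nonneg (v i)) (Ne.symm (dotProduct_self_eq_zero.not.2 hv))
  refine ⟨1 + (N * K + ‖Matrix.vecMulVec v v‖) / (v ⬝ᵥ v), by positivity,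
    fun R₁ R₂ h₁ h₂ a hE ↦ ?_⟩
  have hv₁₂ := hmulVec R₁ R₂ h₁ h₂ a hE
  set E := R₁ - R₂ - Matrix.vecMulVec a v with hE_def
  have ha : R₁ *ᵥ v - R₂ *ᵥ v - E *ᵥ v = (v ⬝ᵥ v) • a := by
    rw [hE_def, ← Matrix.sub_mulVec, Matrix.sub_mulVec _ (Matrix.vecMulVec a v), sub_sub_cancel,
      Matrix.vecMulVec_mulVec, op_smul_eq_smul]
  have hrankOne : (v ⬝ᵥ v) • Matrix.vecMulVec a v =
      Matrix.vecMulVec (R₁ *ᵥ v - R₂ *ᵥ v) v - E * Matrix.vecMulVec v v := by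
    rw [← Matrix.smul_vecMulVec, ← ha, Matrix.mul_vecMulVec, ← Matrix.sub_vecMulVec]
  have hnorm : (v ⬝ᵥ v) * ‖Matrix.vecMulVec a v‖ ≤ (N * K + ‖Matrix.vecMulVec v v‖) * ‖E‖ := by
    calc (v ⬝ᵥ v) * ‖Matrix.vecMulVec a v‖ = ‖(v ⬝ᵥ v) • Matrix.vecMulVec a v‖ := by
          rw [norm_smul, Real.norm_of_nonneg hq.le]
      _ ≤ ‖Matrix.vecMulVec (R₁ *ᵥ v - R₂ *ᵥ v) v‖ + ‖E * Matrix.vecMulVec v v‖ :=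
          hrankOne ▸ norm_sub_le _ _
      _ ≤ N * (K * ‖E‖) + ‖E‖ * ‖Matrix.vecMulVec v v‖ :=
          add_le_add ((hvecMulVec _).trans (by gcongr)) (norm_mul_le _ _)
      _ = (N * K + ‖Matrix.vecMulVec v v‖) * ‖E‖ := by ring
  calc ‖R₁ - R₂‖ = ‖E + Matrix.vecMulVec a v‖ := by rw [hE_def, sub_add_cancel]
    _ ≤ ‖E‖ + ‖Matrix.vecMulVec a v‖ := norm_add_le _ _
    _ ≤ ‖E‖ + (N * K + ‖Matrix.vecMulVec v v‖) * ‖E‖ / (v ⬝ᵥ v) := by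
        gcongr; rwa [le_div_iff₀' hq]
    _ = (1 + (N * K + ‖Matrix.vecMulVec v v‖) / (v ⬝ᵥ v)) * ‖E‖ := by ring

theorem exists_norm_sub_le_of_rankOne {v : Fin d → ℝ} (hv : v ≠ 0) :
    ∃ K : ℝ, 0 ≤ K ∧ ∀ R₁ R₂ : Matrix (Fin d) (Fin d) ℝ, IsSO R₁ → IsSO R₂ → ∀ a : Fin d → ℝ,
      ‖R₁ - R₂‖ ≤ K * ‖R₁ - R₂ - Matrix.vecMulVec a v‖ := by
  obtain ⟨K, hK, hle⟩ := exists_norm_sub_le_of_norm_le_one hv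
  refine ⟨max K (√d + √d), le_max_of_le_left hK, fun R₁ R₂ h₁ h₂ a ↦ ?_⟩
  rcases le_total ‖R₁ - R₂ - Matrix.vecMulVec a v‖ 1 with hE | hE
  · exact (hle R₁ R₂ h₁ h₂ a hE).trans (by gcongr; exact le_max_left _ _)
  · calc ‖R₁ - R₂‖ ≤ ‖R₁‖ + ‖R₂‖ := norm_sub_le _ _
      _ = √d + √d := by rw [h₁.norm_eq, h₂.norm_eq]
      _ ≤ (√d + √d) * ‖R₁ - R₂ - Matrix.vecMulVec a v‖ := le_mul_of_one_le_right (by positivity) hE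
      _ ≤ _ := by gcongr; exact le_max_right _ _

end SpecialOrthogonal

section CubeInterp

variable {n : ℕ}

/-- The linear functional averaging the corner values `f` over the face of the cube on which the
coordinates in `S` agree with those of the corner `s`; each corner of the face is counted
`2 ^ card S` times in the sum. -/
def faceAverage (S : Set (Fin n)) (s : Fin n → Bool) : ((Fin n → Bool) → ℝ) →ₗ[ℝ] ℝ :=
  (2 ^ n : ℝ)⁻¹ • ∑ b : Fin n → Bool, LinearMap.proj (S.piecewise s b)

theorem faceAverage_apply (S : Set (Fin n)) (s : Fin n → Bool) (f : (Fin n → Bool) → ℝ) :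
    faceAverage S s f = (∑ b : Fin n → Bool, f (S.piecewise s b)) / 2 ^ n := by
  simp [faceAverage, div_eq_inv_mul]

theorem faceAverage_empty (s : Fin n → Bool) (f : (Fin n → Bool) → ℝ) :
    faceAverage ∅ s f = (∑ b, f b) / 2 ^ n := by
  simp [faceAverage_apply]

theorem faceAverage_congr {S : Set (Fin n)} {s s' : Fin n → Bool} (h : EqOn s s' S) :
    faceAverage S s = faceAverage S s' := by
  have hpiecewise (b : Fin n → Bool) : S.piecewise s b = S.piecewise s' b := by
    funext i
    by_cases hi : i ∈ S
    · simp [hi, h hi]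
    · simp [hi]
  simp only [faceAverage, hpiecewise]

theorem faceAverage_insertNth {S : Set (Fin (n + 1))} {i : Fin (n + 1)} (hi : i ∈ S)
    (s : Fin (n + 1) → Bool) (f : (Fin (n + 1) → Bool) → ℝ) :
    faceAverage S s f =
      faceAverage (i.succAbove ⁻¹' S) (i.removeNth s) fun b ↦ f (i.insertNth (s i) b) := by
  have hpiecewise (c : Bool) (b : Fin n → Bool) :
      S.piecewise s (Fin.insertNthEquiv (fun _ ↦ Bool) i (c, b)) =
        i.insertNth (s i) ((i.succAbove ⁻¹' S).piecewise (i.removeNth s) b) := by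
    rw [Fin.eq_insertNth_iff]
    refine ⟨by simp [hi], funext fun j ↦ ?_⟩
    by_cases hj : i.succAbove j ∈ S <;> simp [hj, Fin.removeNth]
  rw [faceAverage_apply, faceAverage_apply, ← (Fin.insertNthEquiv (fun _ ↦ Bool) i).sum_comp,
    Fintype.sum_prod_type]
  simp only [hpiecewise, Fintype.sum_bool, pow_succ]
  field_simp
  ring

/-- The distance of `x` to the mid-hyperplane `{u | u i = 1 / 2}` of the unit cube. The order of
these distances decides which faces the simplex containing `x` meets. -/
def centerDist (x : Fin n → ℝ) (i : Fin n) : ℝ := |x i - 1 / 2|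

/-- The corner of the unit cube nearest to `x`, as a bit-vector. -/
def nearestCorner (x : Fin n → ℝ) (i : Fin n) : Bool := if (1 : ℝ) / 2 < x i then true else false

/-- The radial projection of `x` from the barycenter of the cube onto the two faces orthogonal to
the `i`-th axis, in the coordinates of these faces. -/
def radialProj (x : Fin (n + 1) → ℝ) (i : Fin (n + 1)) (j : Fin n) : ℝ :=
  1 / 2 + (x (i.succAbove j) - 1 / 2) / (2 * centerDist x i)

theorem centerDist_radialProj (x : Fin (n + 1) → ℝ) (i : Fin (n + 1)) (j : Fin n) :
    centerDist (radialProj x i) j = centerDist x (i.succAbove j) / (2 * centerDist x i) := by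
  have hnonneg : 0 ≤ 2 * centerDist x i := mul_nonneg zero_le_two (abs_nonneg _)
  rw [centerDist, radialProj, add_sub_cancel_left, abs_div, abs_of_nonneg hnonneg]
  rfl

theorem nearestCorner_radialProj {x : Fin (n + 1) → ℝ} {i : Fin (n + 1)}
    (hi : 0 < centerDist x i) : nearestCorner (radialProj x i) = i.removeNth (nearestCorner x) := by
  funext j
  have hiff : 1 / 2 < radialProj x i j ↔ 1 / 2 < x (i.succAbove j) := by
    rw [radialProj, lt_add_iff_pos_right, div_pos_iff_of_pos_right (by positivity), sub_pos]
  simp only [nearestCorner, hiff, Fin.removeNth]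

theorem cubeInterp_succ {x : Fin (n + 1) → ℝ} {i : Fin (n + 1)} (hpos : 0 < centerDist x i)
    (hmax : ∀ j ≠ i, centerDist x j < centerDist x i) (f : (Fin (n + 1) → Bool) → ℝ) :
    cubeInterp (n + 1) f x =
      (1 - 2 * centerDist x i) * faceAverage ∅ (nearestCorner x) f + 2 * centerDist x i *
        cubeInterp n (fun b ↦ f (i.insertNth (nearestCorner x i) b)) (radialProj x i) := by
  have hexists : ∃ i, ∀ j, |x j - 1 / 2| ≤ |x i - 1 / 2| := Finite.exists_max _
  have hchoose : Classical.choose hexists = i := by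
    by_contra hne
    exact (hmax _ hne).not_ge (Classical.choose_spec hexists i)
  rw [cubeInterp, hchoose, if_neg (by rw [centerDist] at hpos; positivity), faceAverage_empty]
  rfl

/-- The value at `x` of the interpolation of `f` in closed form: each coordinate contributes the
difference of the averages of `f` over two consecutive faces of the chain which leads from the cube
to the corner nearest to `x`. -/
def chainSum (f : (Fin n → Bool) → ℝ) (x : Fin n → ℝ) : ℝ :=
  faceAverage ∅ (nearestCorner x) f + ∑ i, 2 * centerDist x i *
    (faceAverage {j | centerDist x i ≤ centerDist x j} (nearestCorner x) f -
      faceAverage {j | centerDist x i < centerDist x j} (nearestCorner x) f)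

theorem chainSum_succ {x : Fin (n + 1) → ℝ} {i : Fin (n + 1)} (hpos : 0 < centerDist x i)
    (hmax : ∀ j ≠ i, centerDist x j < centerDist x i) (f : (Fin (n + 1) → Bool) → ℝ) :
    chainSum f x =
      (1 - 2 * centerDist x i) * faceAverage ∅ (nearestCorner x) f + 2 * centerDist x i *
        chainSum (fun b ↦ f (i.insertNth (nearestCorner x i) b)) (radialProj x i) := by
  have htpos : 0 < 2 * centerDist x i := mul_pos two_pos hpos
  have hmax_le : {j | centerDist x i ≤ centerDist x j} = {i} :=
    Set.ext fun j ↦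
      ⟨fun hj ↦ not_imp_comm.1 (hmax j) (not_lt.2 hj), fun hj ↦ (congrArg (centerDist x) hj).ge⟩
  have hmax_lt : {j | centerDist x i < centerDist x j} = ∅ :=
    Set.eq_empty_of_forall_notMem fun j hj ↦
      (hmax j fun h ↦ hj.ne' (congrArg (centerDist x) h)).not_gt hj
  have hface : i.succAbove ⁻¹' {i} = ∅ :=
    Set.eq_empty_of_forall_notMem fun j ↦ Fin.succAbove_ne i j
  have hle (j : Fin n) := faceAverage_insertNth
    (S := {l | centerDist x (i.succAbove j) ≤ centerDist x l})
    (hmax _ (Fin.succAbove_ne i j)).le (nearestCorner x) f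
  have hlt (j : Fin n) := faceAverage_insertNth
    (S := {l | centerDist x (i.succAbove j) < centerDist x l})
    (hmax _ (Fin.succAbove_ne i j)) (nearestCorner x) f
  have hscale (a D : ℝ) :
      2 * centerDist x i * (2 * (a / (2 * centerDist x i)) * D) = 2 * a * D := by
    field_simp
  rw [chainSum, chainSum, nearestCorner_radialProj hpos, Fin.sum_univ_succAbove _ i, hmax_le,
    hmax_lt, faceAverage_insertNth (mem_singleton i), hface]
  simp only [hle, hlt, centerDist_radialProj, div_le_div_iff_of_pos_right htpos,
    div_lt_div_iff_of_pos_right htpos, preimage_ofPred_eq, mul_add, Finset.mul_sum, hscale]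
  ring

theorem cubeInterp_eq_chainSum : ∀ (n : ℕ) (f : (Fin n → Bool) → ℝ) (x : Fin n → ℝ),
    Function.Injective (centerDist x) → (∀ i, 0 < centerDist x i) →
      cubeInterp n f x = chainSum f x
  | 0, f, x, _, _ => by
      rw [cubeInterp, chainSum, Fin.sum_univ_zero, add_zero, faceAverage_empty, pow_zero, div_one,
        Fintype.sum_unique]
      exact congrArg f (Subsingleton.elim _ _)
  | n + 1, f, x, hinj, hpos => by
      obtain ⟨i, hi⟩ := Finite.exists_max (centerDist x)
      have hmax (j) (hj : j ≠ i) : centerDist x j < centerDist x i :=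
        lt_of_le_of_ne (hi j) (hinj.ne hj)
      have htpos : 0 < 2 * centerDist x i := mul_pos two_pos (hpos i)
      rw [cubeInterp_succ (hpos i) hmax, chainSum_succ (hpos i) hmax, cubeInterp_eq_chainSum n]
      · intro j j' hjj'
        simp only [centerDist_radialProj] at hjj'
        exact Fin.succAbove_right_injective (hinj ((div_left_inj' htpos.ne').1 hjj'))
      · intro j
        rw [centerDist_radialProj]
        exact div_pos (hpos _) htpos

end CubeInterp

section SectorGradient

open scoped Matrix Matrix.Norms.Frobenius

variable {d : ℕ}

/-- The sign of a coordinate of a corner of the cube `[-1, 1]ⁿ` encoded by a bit. -/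
def bitSign (b : Bool) : ℝ := if b then 1 else -1

theorem bitSign_mul_self (b : Bool) : bitSign b * bitSign b = 1 := by cases b <;> simp [bitSign]

theorem abs_bitSign (b : Bool) : |bitSign b| = 1 := by cases b <;> simp [bitSign]

theorem bitSign_ne_zero (b : Bool) : bitSign b ≠ 0 := by cases b <;> simp [bitSign]

theorem cornerVec_apply (b : Fin d → Bool) (i : Fin d) : cornerVec b i = bitSign (b i) / 2 := by
  cases h : b i <;> simp [cornerVec, bitSign, h, neg_div]

theorem cornerVec_compl (b : Fin d → Bool) (i : Fin d) : cornerVec bᶜ i = -cornerVec b i := by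
  cases h : b i <;> simp [cornerVec, h]

theorem faceAverage_cornerVec (S : Set (Fin d)) (s : Fin d → Bool) (l : Fin d) :
    faceAverage S s (fun b ↦ cornerVec b l) = S.indicator (cornerVec s) l := by
  rw [faceAverage_apply]
  by_cases hl : l ∈ S
  · have hpiecewise (b : Fin d → Bool) : cornerVec (S.piecewise s b) l = cornerVec s l := by
      simp [cornerVec, hl]
    simp [hpiecewise, hl]
  · have hsum : ∑ b : Fin d → Bool, cornerVec b l = -∑ b : Fin d → Bool, cornerVec b l := by
      rw [← Finset.sum_neg_distrib]
      exact Fintype.sum_equiv (Function.Involutive.toPerm _ compl_involutive) _ _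
        fun b ↦ by simp [cornerVec_compl]
    have hpiecewise (b : Fin d → Bool) : cornerVec (S.piecewise s b) l = cornerVec b l := by
      simp [cornerVec, hl]
    simp only [hpiecewise, hl, not_false_eq_true, indicator_of_notMem]
    rw [self_eq_neg.1 hsum, zero_div]

/-- The simplices of the barycentric decomposition of the unit cube: the simplex `(τ, s)` consists
of the points nearest to the corner `s` for which `τ i` is the rank of the coordinate `i` in the
decreasing order of the distances to the mid-hyperplanes. -/
abbrev SectorIndex (d : ℕ) : Type := Equiv.Perm (Fin d) × (Fin d → Bool)

/-- The value of the interpolation at the `k`-th vertex of the simplex `(τ, s)`: this vertex is the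
barycenter of the face on which the `k` coordinates of least rank agree with the corner `s`. -/
def barycenterValue (T : SectorIndex d) (k : ℕ) : ((Fin d → Bool) → ℝ) →ₗ[ℝ] ℝ :=
  faceAverage {l | (T.1 l : ℕ) < k} T.2

/-- The partial derivative in the `i`-th direction of the interpolation on the simplex `T`, as a
function of the corner values. Moving in this direction leads from the vertex `T.1 i` to the next
vertex of the simplex, at distance `1 / 2`. -/
def sectorSlope (T : SectorIndex d) (i : Fin d) : ((Fin d → Bool) → ℝ) →ₗ[ℝ] ℝ :=
  (2 * bitSign (T.2 i)) • (barycenterValue T (T.1 i + 1) - barycenterValue T (T.1 i))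

/-- The gradient on the simplex `T` of the interpolation of vector-valued corner values, which are
given as the columns of a matrix. -/
def refGrad (T : SectorIndex d) :
    Matrix (Fin d) (Fin d → Bool) ℝ →ₗ[ℝ] Matrix (Fin d) (Fin d) ℝ where
  toFun G := Matrix.of fun j i ↦ sectorSlope T i (G.row j)
  map_add' G H := by ext j i; exact map_add (sectorSlope T i) (G.row j) (H.row j)
  map_smul' c G := by ext j i; exact map_smul (sectorSlope T i) c (G.row j)

/-- The gradient of the interpolation on the image of the simplex `T` in a cell spanned by the
columns of `A`. -/
def sectorGrad (A : Matrix (Fin d) (Fin d) ℝ) (T : SectorIndex d) :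
    Matrix (Fin d) (Fin d → Bool) ℝ →ₗ[ℝ] Matrix (Fin d) (Fin d) ℝ :=
  LinearMap.mulRight ℝ A⁻¹ ∘ₗ refGrad T

theorem refGrad_apply (T : SectorIndex d) (G : Matrix (Fin d) (Fin d → Bool) ℝ) (j i : Fin d) :
    refGrad T G j i = 2 * bitSign (T.2 i) *
      (barycenterValue T (T.1 i + 1) (G.row j) - barycenterValue T (T.1 i) (G.row j)) := rfl

theorem sectorGrad_apply (A : Matrix (Fin d) (Fin d) ℝ) (T : SectorIndex d)
    (G : Matrix (Fin d) (Fin d → Bool) ℝ) : sectorGrad A T G = refGrad T G * A⁻¹ := rfl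

/-- The matrix whose columns are the corners of the cube `[-1 / 2, 1 / 2)ᵈ`, so that `Z` is
`A * cornerMatrix d`. -/
def cornerMatrix (d : ℕ) : Matrix (Fin d) (Fin d → Bool) ℝ := Matrix.of fun i b ↦ cornerVec b i

theorem sectorSlope_cornerVec (T : SectorIndex d) (i l : Fin d) :
    sectorSlope T i (fun b ↦ cornerVec b l) = if l = i then 1 else 0 := by
  simp only [sectorSlope, barycenterValue, LinearMap.smul_apply, LinearMap.sub_apply,
    faceAverage_cornerVec, smul_eq_mul, indicator_apply, mem_ofPred_eq]
  rcases eq_or_ne l i with rfl | hl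
  · rw [if_pos (Nat.lt_succ_self _), if_neg (lt_irrefl _), if_pos rfl, cornerVec_apply]
    linear_combination bitSign_mul_self (T.2 l)
  · have hne : (T.1 l : ℕ) ≠ T.1 i := fun h ↦ hl (T.1.injective (Fin.ext h))
    have hiff : (T.1 l : ℕ) < T.1 i + 1 ↔ (T.1 l : ℕ) < T.1 i := by omega
    simp only [hiff, hl, sub_self, mul_zero, if_false]

theorem refGrad_mul_cornerMatrix (T : SectorIndex d) (M : Matrix (Fin d) (Fin d) ℝ) :
    refGrad T (M * cornerMatrix d) = M := by
  ext j i
  have hrow : (M * cornerMatrix d).row j = ∑ l, M j l • fun b ↦ cornerVec b l := by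
    ext b
    simp [Matrix.mul_apply, cornerMatrix]
  change sectorSlope T i ((M * cornerMatrix d).row j) = M j i
  simp [hrow, map_sum, sectorSlope_cornerVec]

theorem sectorGrad_mul_cornerMatrix {A : Matrix (Fin d) (Fin d) ℝ} (hA : A.det ≠ 0)
    (T : SectorIndex d) (R : Matrix (Fin d) (Fin d) ℝ) :
    sectorGrad A T (R * (A * cornerMatrix d)) = R := by
  rw [sectorGrad_apply, ← Matrix.mul_assoc, refGrad_mul_cornerMatrix,
    Matrix.mul_nonsing_inv_cancel_right A R hA.isUnit]

theorem refGrad_one_mulVec_cornerVec {G : CellMat d} (hG : PerpTrans G) (s : Fin d → Bool)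
    (j : Fin d) : (refGrad (1, s) (Matrix.of G) *ᵥ cornerVec s) j = G j s := by
  have hterm (i : Fin d) : refGrad (1, s) (Matrix.of G) j i * cornerVec s i =
      barycenterValue (1, s) (i + 1) (G j) - barycenterValue (1, s) i (G j) := by
    rw [refGrad_apply, cornerVec_apply]
    change 2 * bitSign (s i) * (barycenterValue (1, s) (i + 1) (G j) -
      barycenterValue (1, s) i (G j)) * (bitSign (s i) / 2) = _
    linear_combination (barycenterValue (1, s) (i + 1) (G j) - barycenterValue (1, s) i (G j)) *
      bitSign_mul_self (s i)
  have hzero : barycenterValue (1, s) 0 (G j) = 0 := by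
    simp [barycenterValue, faceAverage_apply, hG j]
  have hlast : barycenterValue (1, s) d (G j) = G j s := by
    simp [barycenterValue, faceAverage_apply]
  simp only [Matrix.mulVec, dotProduct, hterm]
  rw [Fin.sum_univ_eq_sum_range fun k ↦
      barycenterValue (1, s) (k + 1) (G j) - barycenterValue (1, s) k (G j),
    Finset.sum_range_sub fun k ↦ barycenterValue (1, s) k (G j), hzero, hlast, sub_zero]

theorem swap_castSucc_succ_lt_iff {n : ℕ} (m : Fin n) (x : Fin (n + 1)) {k : ℕ}
    (hk : k ≠ m + 1) : (Equiv.swap m.castSucc m.succ x : ℕ) < k ↔ (x : ℕ) < k := by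
  rw [Equiv.swap_apply_def]
  split_ifs with h h
  · subst h; simp only [Fin.val_succ, Fin.val_castSucc]; omega
  · subst h; simp only [Fin.val_succ, Fin.val_castSucc]; omega
  · rfl

theorem barycenterValue_swap {n : ℕ} (τ : Equiv.Perm (Fin (n + 1))) (s : Fin (n + 1) → Bool)
    (m : Fin n) {k : ℕ} (hk : k ≠ m + 1) :
    barycenterValue (Equiv.swap m.castSucc m.succ * τ, s) k = barycenterValue (τ, s) k := by
  simp only [barycenterValue, Equiv.Perm.mul_apply, swap_castSucc_succ_lt_iff m _ hk]

theorem exists_refGrad_sub_swap_eq_vecMulVec {n : ℕ} (τ : Equiv.Perm (Fin (n + 1)))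
    (s : Fin (n + 1) → Bool) (m : Fin n) :
    ∃ v ≠ 0, ∀ G, ∃ a, refGrad (τ, s) G - refGrad (Equiv.swap m.castSucc m.succ * τ, s) G =
      Matrix.vecMulVec a v := by
  obtain ⟨i₁, hi₁⟩ := τ.surjective m.castSucc
  obtain ⟨i₂, hi₂⟩ := τ.surjective m.succ
  have hne : i₁ ≠ i₂ := fun h ↦ m.castSucc_lt_succ.ne (hi₁.symm.trans ((congrArg τ h).trans hi₂))
  refine ⟨fun i ↦ if i = i₁ then bitSign (s i₁) else if i = i₂ then -bitSign (s i₂) else 0,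
    fun h ↦ bitSign_ne_zero (s i₁) (by simpa using congrFun h i₁), fun G ↦ ⟨fun j ↦
      2 * (barycenterValue (τ, s) (m + 1) (G.row j) - barycenterValue (τ, s) m (G.row j) -
        (barycenterValue (τ, s) (m + 2) (G.row j) -
          barycenterValue (Equiv.swap m.castSucc m.succ * τ, s) (m + 1) (G.row j))), ?_⟩⟩
  ext j i
  rw [Matrix.sub_apply, Matrix.vecMulVec_apply, refGrad_apply, refGrad_apply]
  dsimp only [Equiv.Perm.mul_apply]
  by_cases h₁ : i = i₁
  · subst h₁
    rw [if_pos rfl, hi₁, Equiv.swap_apply_left, Fin.val_succ, Fin.val_castSucc,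
      barycenterValue_swap τ s m (k := m + 1 + 1) (by omega)]
    ring
  by_cases h₂ : i = i₂
  · subst h₂
    rw [if_neg hne.symm, if_pos rfl, hi₂, Equiv.swap_apply_right, Fin.val_succ, Fin.val_castSucc,
      barycenterValue_swap τ s m (k := m) (by omega)]
    ring
  · have hcast : τ i ≠ m.castSucc := fun h ↦ h₁ (τ.injective (h.trans hi₁.symm))
    have hsucc : τ i ≠ m.succ := fun h ↦ h₂ (τ.injective (h.trans hi₂.symm))
    have hm : (τ i : ℕ) ≠ m := fun h ↦ hcast (Fin.ext h)
    have hm' : (τ i : ℕ) ≠ m + 1 := fun h ↦ hsucc (Fin.ext h)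
    rw [if_neg h₁, if_neg h₂, Equiv.swap_apply_of_ne_of_ne hcast hsucc,
      barycenterValue_swap τ s m hm', barycenterValue_swap τ s m (by omega)]
    ring

theorem exists_refGrad_sub_update_eq_vecMulVec {n : ℕ} {τ : Equiv.Perm (Fin (n + 1))}
    {i₀ : Fin (n + 1)} (hi₀ : τ i₀ = Fin.last n) (s : Fin (n + 1) → Bool) (c : Bool) :
    ∃ v ≠ 0, ∀ G, ∃ a, refGrad (τ, s) G - refGrad (τ, Function.update s i₀ c) G =
      Matrix.vecMulVec a v := by
  refine ⟨Pi.single i₀ 1, by simp, fun G ↦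
    ⟨fun j ↦ (refGrad (τ, s) G - refGrad (τ, Function.update s i₀ c) G) j i₀, ?_⟩⟩
  ext j i
  rw [Matrix.vecMulVec_apply]
  rcases eq_or_ne i i₀ with rfl | hi
  · simp
  have hlast : (τ i₀ : ℕ) = n := by rw [hi₀, Fin.val_last]
  have hlt : (τ i : ℕ) < n := lt_of_le_of_ne (Nat.lt_succ_iff.1 (τ i).isLt)
    fun h ↦ hi (τ.injective (Fin.ext (h.trans hlast.symm)))
  have hvalue {k : ℕ} (hk : k ≤ n) :
      barycenterValue (τ, Function.update s i₀ c) k = barycenterValue (τ, s) k := by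
    refine faceAverage_congr fun l hl ↦ Function.update_of_ne ?_ _ _
    rintro rfl
    exact hl.not_ge (hlast ▸ hk)
  rw [Pi.single_eq_of_ne hi, mul_zero, Matrix.sub_apply, refGrad_apply, refGrad_apply]
  dsimp only
  rw [hvalue (Nat.succ_le_of_lt hlt), hvalue hlt.le, Function.update_of_ne hi, sub_self]

end SectorGradient

section Comparison

open scoped Matrix Matrix.Norms.Frobenius

variable {d : ℕ} {A : Matrix (Fin d) (Fin d) ℝ} {T T' T'' : SectorIndex d}

/-- Rotations assigned to the simplices `T` and `T'` are comparable if their distance is controlled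
by the distance of the family of all sector gradients to the family of assigned rotations. -/
def SectorsComparable (A : Matrix (Fin d) (Fin d) ℝ) (T T' : SectorIndex d) : Prop :=
  ∃ K : ℝ, 0 ≤ K ∧ ∀ (G : Matrix (Fin d) (Fin d → Bool) ℝ)
    (R : SectorIndex d → Matrix (Fin d) (Fin d) ℝ), (∀ S, IsSO (R S)) →
      ‖R T - R T'‖ ≤ K * ‖fun S ↦ sectorGrad A S G - R S‖

theorem SectorsComparable.refl (A : Matrix (Fin d) (Fin d) ℝ) (T : SectorIndex d) :
    SectorsComparable A T T :=
  ⟨0, le_rfl, fun G R _ ↦ by simp⟩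

theorem SectorsComparable.symm (h : SectorsComparable A T T') : SectorsComparable A T' T := by
  simpa only [SectorsComparable, norm_sub_rev] using h

theorem SectorsComparable.trans (h : SectorsComparable A T T') (h' : SectorsComparable A T' T'') :
    SectorsComparable A T T'' := by
  obtain ⟨K, hK, h⟩ := h
  obtain ⟨K', hK', h'⟩ := h'
  refine ⟨K + K', add_nonneg hK hK', fun G R hR ↦ ?_⟩
  rw [add_mul]
  exact (norm_sub_le_norm_sub_add_norm_sub _ _ _).trans (add_le_add (h G R hR) (h' G R hR))

theorem SectorsComparable.of_refGrad_sub_eq_vecMulVec (hA : A.det ≠ 0)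
    (h : ∃ v ≠ 0, ∀ G, ∃ a, refGrad T G - refGrad T' G = Matrix.vecMulVec a v) :
    SectorsComparable A T T' := by
  obtain ⟨v, hv, h⟩ := h
  have hv' : v ᵥ* A⁻¹ ≠ 0 := by
    rw [← Matrix.zero_vecMul A⁻¹]
    exact (Matrix.vecMul_injective_of_isUnit
      ((Matrix.isUnit_nonsing_inv_iff).2 ((Matrix.isUnit_iff_isUnit_det A).2 hA.isUnit))).ne hv
  obtain ⟨K, hK, hle⟩ := exists_norm_sub_le_of_rankOne hv'
  refine ⟨K * 2, by positivity, fun G R hR ↦ ?_⟩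
  obtain ⟨a, ha⟩ := h G
  set Δ := fun S ↦ sectorGrad A S G - R S with hΔ
  have hdiff : R T - R T' - Matrix.vecMulVec a (v ᵥ* A⁻¹) = Δ T' - Δ T := by
    rw [← Matrix.vecMulVec_mul, ← ha, Matrix.sub_mul, ← sectorGrad_apply, ← sectorGrad_apply]
    simp only [hΔ]
    abel
  calc ‖R T - R T'‖ ≤ K * ‖Δ T' - Δ T‖ := hdiff ▸ hle (R T) (R T') (hR T) (hR T') a
    _ ≤ K * (‖Δ‖ + ‖Δ‖) := by
        gcongr
        exact (norm_sub_le _ _).trans (add_le_add (norm_le_pi_norm Δ T') (norm_le_pi_norm Δ T))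
    _ = K * 2 * ‖Δ‖ := by ring

theorem sectorsComparable_perm {n : ℕ} {A : Matrix (Fin (n + 1)) (Fin (n + 1)) ℝ} (hA : A.det ≠ 0)
    (τ τ' : Equiv.Perm (Fin (n + 1))) (s : Fin (n + 1) → Bool) :
    SectorsComparable A (τ, s) (τ', s) := by
  suffices h : ∀ π τ : Equiv.Perm (Fin (n + 1)), SectorsComparable A (τ, s) (π * τ, s) by
    simpa using h (τ' * τ⁻¹) τ
  intro π
  have hπ : π ∈ Submonoid.closure (range fun m : Fin n ↦ Equiv.swap m.castSucc m.succ) := by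
    rw [Equiv.Perm.mclosure_swap_castSucc_succ]
    trivial
  induction hπ using Submonoid.closure_induction_left with
  | one => exact fun τ ↦ SectorsComparable.refl A (τ, s)
  | mul_left _ hswap σ _ ih =>
    obtain ⟨m, rfl⟩ := hswap
    exact fun τ ↦ (ih τ).trans (.of_refGrad_sub_eq_vecMulVec hA
      (exists_refGrad_sub_swap_eq_vecMulVec (σ * τ) s m))

theorem sectorsComparable_update {n : ℕ} {A : Matrix (Fin (n + 1)) (Fin (n + 1)) ℝ}
    (hA : A.det ≠ 0) (τ : Equiv.Perm (Fin (n + 1))) (s : Fin (n + 1) → Bool) (i : Fin (n + 1))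
    (c : Bool) : SectorsComparable A (τ, s) (τ, Function.update s i c) :=
  (sectorsComparable_perm hA τ (Equiv.swap i (Fin.last n)) s).trans
    ((SectorsComparable.of_refGrad_sub_eq_vecMulVec hA
      (exists_refGrad_sub_update_eq_vecMulVec (Equiv.swap_apply_left i (Fin.last n)) s c)).trans
        (sectorsComparable_perm hA _ τ _))

theorem sectorsComparable (hA : A.det ≠ 0) (T T' : SectorIndex d) : SectorsComparable A T T' := by
  obtain _ | n := d
  · exact Subsingleton.elim T T' ▸ SectorsComparable.refl A T
  obtain ⟨τ, s⟩ := T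
  obtain ⟨τ', s'⟩ := T'
  have hcorner (F : Finset (Fin (n + 1))) : SectorsComparable A (τ, s) (τ, F.piecewise s' s) := by
    induction F using Finset.induction_on with
    | empty => simpa only [Finset.piecewise_empty] using SectorsComparable.refl A (τ, s)
    | insert i F _ ih =>
      rw [Finset.piecewise_insert]
      exact ih.trans (sectorsComparable_update hA τ _ i _)
  have huniv := hcorner Finset.univ
  rw [Finset.piecewise_univ] at huniv
  exact huniv.trans (sectorsComparable_perm hA τ τ' s')

/-- Recovers the corner values `G`, normalized to have mean zero, from the gradients on the
simplices of the barycentric decomposition: the segment from the barycenter of the cell to the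
corner `b` lies in the simplex `(1, b)`. -/
def cornersOfGrads (A : Matrix (Fin d) (Fin d) ℝ) :
    (SectorIndex d → Matrix (Fin d) (Fin d) ℝ) →ₗ[ℝ] Matrix (Fin d) (Fin d → Bool) ℝ where
  toFun M := Matrix.of fun j b ↦ ((M (1, b) * A) *ᵥ cornerVec b) j
  map_add' M N := by ext j b; simp [Matrix.add_mul, Matrix.add_mulVec]
  map_smul' c M := by ext j b; simp [Matrix.smul_mulVec]

theorem cornersOfGrads_sectorGrad (hA : A.det ≠ 0) {G : CellMat d} (hG : PerpTrans G) :
    cornersOfGrads A (fun T ↦ sectorGrad A T (Matrix.of G)) = Matrix.of G := by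
  ext j b
  change ((refGrad (1, b) (Matrix.of G) * A⁻¹ * A) *ᵥ cornerVec b) j = G j b
  rw [Matrix.nonsing_inv_mul_cancel_right A _ hA.isUnit, refGrad_one_mulVec_cornerVec hG]

theorem cornersOfGrads_const (A R : Matrix (Fin d) (Fin d) ℝ) :
    cornersOfGrads A (fun _ ↦ R) = R * (A * cornerMatrix d) := by
  rw [← Matrix.mul_assoc]
  rfl

theorem exists_norm_cornersOfGrads_le (A : Matrix (Fin d) (Fin d) ℝ) :
    ∃ N > 0, ∀ M, ‖cornersOfGrads A M‖ ≤ N * ‖M‖ :=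
  (cornersOfGrads A).toContinuousLinearMap.bound

theorem exists_norm_sectorGrad_le (A : Matrix (Fin d) (Fin d) ℝ) :
    ∃ N > 0, ∀ T G, ‖sectorGrad A T G‖ ≤ N * ‖G‖ := by
  obtain ⟨N, hN, hle⟩ :=
    (LinearMap.pi fun T : SectorIndex d ↦ sectorGrad A T).toContinuousLinearMap.bound
  exact ⟨N, hN, fun T G ↦ (norm_le_pi_norm (fun T ↦ sectorGrad A T G) T).trans (hle G)⟩

theorem mnorm_eq_norm (G : CellMat d) : mnorm G = ‖Matrix.of G‖ :=
  (frobenius_norm_eq_sqrt (Matrix.of G)).symm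

theorem sqnorm_eq_norm (M : Matrix (Fin d) (Fin d) ℝ) : sqnorm d (Matrix.of.symm M) = ‖M‖ :=
  (frobenius_norm_eq_sqrt M).symm

theorem distSO_eq_infDist (M : Matrix (Fin d) (Fin d) ℝ) :
    distSO d (Matrix.of.symm M) = Metric.infDist M {R | IsSO R} := by
  have hdist (R : Matrix (Fin d) (Fin d) ℝ) :
      (sqnorm d fun j i ↦ Matrix.of.symm M j i - R j i) = dist M R := by
    rw [dist_eq_norm, ← sqnorm_eq_norm]
    rfl
  rw [Metric.infDist_eq_iInf, ← sInf_image']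
  exact congrArg sInf (Set.ext fun t ↦ exists_congr fun R ↦
    and_congr_right fun _ ↦ by rw [hdist, eq_comm])

theorem distSObar_eq_infDist (A : Matrix (Fin d) (Fin d) ℝ) (G : CellMat d) :
    distSObar d A G =
      Metric.infDist (Matrix.of G)
        ((fun R : Matrix (Fin d) (Fin d) ℝ ↦ R * (A * cornerMatrix d)) '' {R | IsSO R}) := by
  have hdist (R : Matrix (Fin d) (Fin d) ℝ) :
      mnorm (G - rotCell R (Zmat d A)) = dist (Matrix.of G) (R * (A * cornerMatrix d)) := by
    rw [dist_eq_norm, mnorm_eq_norm]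
    rfl
  rw [Metric.infDist_eq_iInf, ← sInf_image', image_image]
  refine congrArg sInf (Set.ext fun t ↦ ⟨?_, ?_⟩)
  · rintro ⟨-, ⟨R, hR, rfl⟩, rfl⟩
    exact ⟨R, hR, (hdist R).symm⟩
  · rintro ⟨R, hR, rfl⟩
    exact ⟨_, ⟨R, hR, rfl⟩, (hdist R).symm⟩

theorem exists_norm_sub_eq_distSO (M : Matrix (Fin d) (Fin d) ℝ) :
    ∃ R, IsSO R ∧ ‖M - R‖ = distSO d (Matrix.of.symm M) := by
  obtain ⟨R, hR, hdist⟩ := (isCompact_setOf_isSO d).exists_infDist_eq_dist ⟨1, isSO_one⟩ M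
  exact ⟨R, hR, by rw [distSO_eq_infDist, hdist, dist_eq_norm]⟩

theorem exists_norm_sub_eq_distSObar (A : Matrix (Fin d) (Fin d) ℝ) (G : CellMat d) :
    ∃ R, IsSO R ∧ ‖Matrix.of G - R * (A * cornerMatrix d)‖ = distSObar d A G := by
  have hcompact := (isCompact_setOf_isSO d).image
    (f := fun R : Matrix (Fin d) (Fin d) ℝ ↦ R * (A * cornerMatrix d))
    (Continuous.matrix_mul continuous_id continuous_const)
  obtain ⟨-, ⟨R, hR, rfl⟩, hdist⟩ :=
    hcompact.exists_infDist_eq_dist (Set.Nonempty.image _ ⟨1, isSO_one⟩) (Matrix.of G)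
  exact ⟨R, hR, (dist_eq_norm _ _).symm.trans (hdist.symm.trans (distSObar_eq_infDist A G).symm)⟩

theorem IsSO.distSO_le {R : Matrix (Fin d) (Fin d) ℝ} (hR : IsSO R)
    (M : Matrix (Fin d) (Fin d) ℝ) : distSO d (Matrix.of.symm M) ≤ ‖M - R‖ := by
  rw [distSO_eq_infDist, ← dist_eq_norm]
  exact Metric.infDist_le_dist_of_mem hR

theorem IsSO.distSObar_le {R : Matrix (Fin d) (Fin d) ℝ} (hR : IsSO R)
    (A : Matrix (Fin d) (Fin d) ℝ) (G : CellMat d) :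
    distSObar d A G ≤ ‖Matrix.of G - R * (A * cornerMatrix d)‖ := by
  rw [distSObar_eq_infDist, ← dist_eq_norm]
  exact Metric.infDist_le_dist_of_mem (mem_image_of_mem _ hR)

theorem distSO_nonneg (F : Fin d → Fin d → ℝ) : 0 ≤ distSO d F :=
  (distSO_eq_infDist (Matrix.of F)) ▸ Metric.infDist_nonneg

theorem distSObar_nonneg (A : Matrix (Fin d) (Fin d) ℝ) (G : CellMat d) : 0 ≤ distSObar d A G :=
  distSObar_eq_infDist A G ▸ Metric.infDist_nonneg

theorem exists_forall_norm_rotation_sub_le (hA : A.det ≠ 0) :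
    ∃ K : ℝ, 0 ≤ K ∧ ∀ (T T' : SectorIndex d) (G : Matrix (Fin d) (Fin d → Bool) ℝ)
      (R : SectorIndex d → Matrix (Fin d) (Fin d) ℝ), (∀ S, IsSO (R S)) →
        ‖R T - R T'‖ ≤ K * ‖fun S ↦ sectorGrad A S G - R S‖ := by
  choose K hK hle using fun P : SectorIndex d × SectorIndex d ↦ sectorsComparable hA P.1 P.2
  refine ⟨∑ P, K P, Finset.sum_nonneg fun P _ ↦ hK P, fun T T' G R hR ↦
    (hle (T, T') G R hR).trans ?_⟩
  gcongr
  exact Finset.single_le_sum (fun P _ ↦ hK P) (Finset.mem_univ (T, T'))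

theorem exists_distSObar_le_mul_distSO (hA : A.det ≠ 0) :
    ∃ K > 0, ∀ G : CellMat d, PerpTrans G →
      ∃ T, distSObar d A G ≤ K * distSO d (Matrix.of.symm (sectorGrad A T (Matrix.of G))) := by
  obtain ⟨K, hK, hrot⟩ := exists_forall_norm_rotation_sub_le hA
  obtain ⟨N, hN, hcorners⟩ := exists_norm_cornersOfGrads_le A
  refine ⟨N * (1 + K), by positivity, fun G hG ↦ ?_⟩
  choose R hR hdist using fun T ↦ exists_norm_sub_eq_distSO (sectorGrad A T (Matrix.of G))
  obtain ⟨T, hT⟩ :=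
    Finite.exists_max fun T ↦ distSO d (Matrix.of.symm (sectorGrad A T (Matrix.of G)))
  set δ := distSO d (Matrix.of.symm (sectorGrad A T (Matrix.of G)))
  have hδ : ‖fun S ↦ sectorGrad A S (Matrix.of G) - R S‖ ≤ δ :=
    (pi_norm_le_iff_of_nonneg (distSO_nonneg _)).2 fun S ↦ (hdist S).le.trans (hT S)
  have hconst : ‖(fun S ↦ sectorGrad A S (Matrix.of G)) - fun _ ↦ R T‖ ≤ (1 + K) * δ := by
    refine (pi_norm_le_iff_of_nonneg (mul_nonneg (by positivity) (distSO_nonneg _))).2 fun S ↦ ?_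
    calc ‖sectorGrad A S (Matrix.of G) - R T‖
        ≤ ‖sectorGrad A S (Matrix.of G) - R S‖ + ‖R S - R T‖ :=
          norm_sub_le_norm_sub_add_norm_sub _ _ _
      _ ≤ δ + K * δ := add_le_add ((norm_le_pi_norm _ S).trans hδ)
          ((hrot S T _ R hR).trans (by gcongr))
      _ = (1 + K) * δ := by ring
  refine ⟨T, ?_⟩
  calc distSObar d A G ≤ ‖Matrix.of G - R T * (A * cornerMatrix d)‖ := (hR T).distSObar_le A G
    _ = ‖cornersOfGrads A ((fun S ↦ sectorGrad A S (Matrix.of G)) - fun _ ↦ R T)‖ := by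
        rw [map_sub, cornersOfGrads_sectorGrad hA hG, cornersOfGrads_const]
    _ ≤ N * ((1 + K) * δ) := (hcorners _).trans (by gcongr)
    _ = N * (1 + K) * δ := by ring

theorem exists_distSO_le_mul_distSObar (hA : A.det ≠ 0) :
    ∃ K > 0, ∀ (G : CellMat d) (T : SectorIndex d),
      distSO d (Matrix.of.symm (sectorGrad A T (Matrix.of G))) ≤ K * distSObar d A G := by
  obtain ⟨K, hK, hle⟩ := exists_norm_sectorGrad_le A
  refine ⟨K, hK, fun G T ↦ ?_⟩
  obtain ⟨R, hR, hdist⟩ := exists_norm_sub_eq_distSObar A G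
  calc distSO d (Matrix.of.symm (sectorGrad A T (Matrix.of G)))
      ≤ ‖sectorGrad A T (Matrix.of G) - R‖ := hR.distSO_le _
    _ = ‖sectorGrad A T (Matrix.of G - R * (A * cornerMatrix d))‖ := by
        rw [map_sub, sectorGrad_mul_cornerMatrix hA]
    _ ≤ K * distSObar d A G := hdist ▸ hle T _

theorem exists_mnorm_le_mul_sqnorm (hA : A.det ≠ 0) :
    ∃ K > 0, ∀ G : CellMat d, PerpTrans G →
      ∃ T, mnorm G ≤ K * sqnorm d (Matrix.of.symm (sectorGrad A T (Matrix.of G))) := by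
  obtain ⟨N, hN, hcorners⟩ := exists_norm_cornersOfGrads_le A
  refine ⟨N, hN, fun G hG ↦ ?_⟩
  obtain ⟨T, hT⟩ := Finite.exists_max fun T ↦ ‖sectorGrad A T (Matrix.of G)‖
  refine ⟨T, ?_⟩
  calc mnorm G = ‖cornersOfGrads A fun S ↦ sectorGrad A S (Matrix.of G)‖ := by
        rw [cornersOfGrads_sectorGrad hA hG, mnorm_eq_norm]
    _ ≤ N * ‖sectorGrad A T (Matrix.of G)‖ := (hcorners _).trans (by
        gcongr
        exact (pi_norm_le_iff_of_nonneg (norm_nonneg _)).2 hT)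
    _ = N * sqnorm d (Matrix.of.symm (sectorGrad A T (Matrix.of G))) := by rw [sqnorm_eq_norm]

theorem exists_sqnorm_le_mul_mnorm (A : Matrix (Fin d) (Fin d) ℝ) :
    ∃ K > 0, ∀ (G : CellMat d) (T : SectorIndex d),
      sqnorm d (Matrix.of.symm (sectorGrad A T (Matrix.of G))) ≤ K * mnorm G := by
  obtain ⟨K, hK, hle⟩ := exists_norm_sectorGrad_le A
  refine ⟨K, hK, fun G T ↦ ?_⟩
  rw [sqnorm_eq_norm, mnorm_eq_norm]
  exact hle T _

end Comparison

section Sectors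

variable {d : ℕ} {T : SectorIndex d} {u : Fin d → ℝ}

/-- The open cone with apex the barycenter of the unit cube spanned by the simplex `T`; the
interpolation is affine on it. -/
def sector (T : SectorIndex d) : Set (Fin d → ℝ) :=
  {u | (∀ i j, T.1 i < T.1 j → centerDist u j < centerDist u i) ∧
    ∀ i, 0 < bitSign (T.2 i) * (u i - 1 / 2)}

/-- The half-open reference cell `[0, 1)ᵈ`. -/
def unitCube (d : ℕ) : Set (Fin d → ℝ) := univ.pi fun _ ↦ Ico 0 1

theorem measurableSet_unitCube (d : ℕ) : MeasurableSet (unitCube d) :=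
  MeasurableSet.univ_pi fun _ ↦ measurableSet_Ico

theorem volume_unitCube (d : ℕ) : volume (unitCube d) = 1 := by
  simp [unitCube, Real.volume_pi_Ico]

theorem isOpen_sector (T : SectorIndex d) : IsOpen (sector T) := by
  simp only [sector, ofPred_and, ofPred_forall, centerDist]
  exact (isOpen_iInter_of_finite fun i ↦ isOpen_iInter_of_finite fun j ↦
    isOpen_iInter_of_finite fun _ ↦ isOpen_lt (by fun_prop) (by fun_prop)).inter
      (isOpen_iInter_of_finite fun i ↦ isOpen_lt (by fun_prop) (by fun_prop))

theorem centerDist_lt_iff_of_mem_sector (hu : u ∈ sector T) (i j : Fin d) :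
    centerDist u i < centerDist u j ↔ T.1 j < T.1 i := by
  refine ⟨fun h ↦ lt_of_not_ge fun hle ↦ ?_, hu.1 j i⟩
  rcases hle.lt_or_eq with hlt | heq
  · exact h.not_gt (hu.1 i j hlt)
  · exact h.ne (congrArg (centerDist u) (T.1.injective heq))

theorem centerDist_injective_of_mem_sector (hu : u ∈ sector T) :
    Function.Injective (centerDist u) := by
  intro i j hij
  refine T.1.injective (le_antisymm ?_ ?_) <;>
    exact not_lt.1 fun h ↦ ((centerDist_lt_iff_of_mem_sector hu _ _).2 h).ne (by rw [hij])

theorem bitSign_nearestCorner_mul_sub (u : Fin d → ℝ) (i : Fin d) :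
    bitSign (nearestCorner u i) * (u i - 1 / 2) = centerDist u i := by
  rw [nearestCorner, centerDist]
  split_ifs with h
  · rw [abs_of_pos (sub_pos.2 h), bitSign, if_pos rfl, one_mul]
  · rw [abs_of_nonpos (sub_nonpos.2 (not_lt.1 h)), bitSign, if_neg Bool.false_ne_true,
      neg_one_mul]

theorem nearestCorner_eq_of_mem_sector (hu : u ∈ sector T) : nearestCorner u = T.2 := by
  funext i
  have hi := hu.2 i
  rw [nearestCorner]
  cases hT : T.2 i
  · rw [hT, bitSign, if_neg Bool.false_ne_true] at hi
    exact if_neg (by linarith)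
  · rw [hT, bitSign, if_pos rfl] at hi
    exact if_pos (by linarith)

theorem centerDist_pos_of_mem_sector (hu : u ∈ sector T) (i : Fin d) : 0 < centerDist u i := by
  rw [← bitSign_nearestCorner_mul_sub, nearestCorner_eq_of_mem_sector hu]
  exact hu.2 i

theorem pairwise_disjoint_sector (d : ℕ) :
    Pairwise (Function.onFun Disjoint (sector : SectorIndex d → Set (Fin d → ℝ))) := by
  intro T T' hne
  refine Set.disjoint_left.2 fun u hu hu' ↦ hne (Prod.ext ?_ ?_)
  · have hmono : StrictMono (T'.1 ∘ T.1.symm) := fun a b hab ↦ by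
      rw [Function.comp_apply, Function.comp_apply, ← centerDist_lt_iff_of_mem_sector hu',
        centerDist_lt_iff_of_mem_sector hu]
      simpa using hab
    have hid : T'.1 ∘ T.1.symm = id := (hmono.range_inj strictMono_id).1 <| by
      rw [(T'.1.surjective.comp T.1.symm.surjective).range_eq, range_id]
    exact Equiv.ext fun i ↦ by simpa using (congrFun hid (T.1 i)).symm
  · rw [← nearestCorner_eq_of_mem_sector hu, nearestCorner_eq_of_mem_sector hu']

theorem exists_mem_sector (hinj : Function.Injective (centerDist u)) (hne : ∀ i, u i ≠ 1 / 2) :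
    ∃ T, u ∈ sector T := by
  let τ := Tuple.sort fun i ↦ -centerDist u i
  refine ⟨(τ.symm, nearestCorner u), fun i j hij ↦ ?_, fun i ↦ ?_⟩
  · have hle := Tuple.monotone_sort (fun i ↦ -centerDist u i) hij.le
    simp only [Function.comp_apply, τ, Equiv.apply_symm_apply, neg_le_neg_iff] at hle
    exact hle.lt_of_ne fun h ↦ hij.ne (congrArg τ.symm (hinj h).symm)
  · rw [bitSign_nearestCorner_mul_sub]
    exact abs_pos.2 (sub_ne_zero.2 (hne i))

theorem volume_preimage_singleton_eq_zero {E : Type*} [NormedAddCommGroup E] [NormedSpace ℝ E]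
    [MeasurableSpace E] [BorelSpace E] [FiniteDimensional ℝ E] (μ : Measure E)
    [μ.IsAddHaarMeasure] {l : E →ₗ[ℝ] ℝ} (hl : l ≠ 0) (c : ℝ) : μ (l ⁻¹' {c}) = 0 := by
  have hcoe : l ⁻¹' {c} = ((affineSpan ℝ {c}).comap l.toAffineMap : Set E) := by
    simp [AffineSubspace.coe_comap, AffineSubspace.coe_affineSpan_singleton]
  rw [hcoe]
  refine Measure.addHaar_affineSubspace μ _ fun htop ↦ hl (LinearMap.ext fun u ↦ ?_)
  have hmem (v : E) : l v = c := by
    have : v ∈ l ⁻¹' {c} := by rw [hcoe, htop]; trivial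
    exact this
  rw [hmem u, ← hmem 0, map_zero, LinearMap.zero_apply]

theorem ae_ne_of_linearMap_ne_zero {l : (Fin d → ℝ) →ₗ[ℝ] ℝ} (hl : l ≠ 0) (c : ℝ) :
    ∀ᵐ u : Fin d → ℝ, l u ≠ c :=
  measure_eq_zero_iff_ae_notMem.1 (volume_preimage_singleton_eq_zero volume hl c)

theorem ae_exists_mem_sector (d : ℕ) : ∀ᵐ u : Fin d → ℝ, ∃ T : SectorIndex d, u ∈ sector T := by
  let π (i : Fin d) : (Fin d → ℝ) →ₗ[ℝ] ℝ := LinearMap.proj i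
  have hhalf : ∀ᵐ u : Fin d → ℝ, ∀ i, u i ≠ 1 / 2 := ae_all_iff.2 fun i ↦
    ae_ne_of_linearMap_ne_zero (l := π i)
      (fun h ↦ by simpa [π] using LinearMap.congr_fun h (Pi.single i 1)) _
  have hsub : ∀ᵐ u : Fin d → ℝ, ∀ i j, i ≠ j → u i - u j ≠ 0 := by
    refine ae_all_iff.2 fun i ↦ ae_all_iff.2 fun j ↦ ae_all_iff.2 fun hij ↦
      ae_ne_of_linearMap_ne_zero (l := π i - π j) (fun h ↦ ?_) _
    simpa [π, hij.symm] using LinearMap.congr_fun h (Pi.single i 1)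
  have hadd : ∀ᵐ u : Fin d → ℝ, ∀ i j, i ≠ j → u i + u j ≠ 1 := by
    refine ae_all_iff.2 fun i ↦ ae_all_iff.2 fun j ↦ ae_all_iff.2 fun hij ↦
      ae_ne_of_linearMap_ne_zero (l := π i + π j) (fun h ↦ ?_) _
    simpa [π, hij.symm] using LinearMap.congr_fun h (Pi.single i 1)
  filter_upwards [hhalf, hsub, hadd] with u hhalf hsub hadd
  refine exists_mem_sector (fun i j hij ↦ by_contra fun hne ↦ ?_) hhalf
  rcases abs_eq_abs.1 hij with h | h
  · exact hsub i j hne (by linarith)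
  · exact hadd i j hne (by linarith)

theorem sector_inter_pi_Ioo_nonempty (T : SectorIndex d) :
    (sector T ∩ univ.pi fun _ ↦ Ioo 0 1).Nonempty := by
  have hpos (i : Fin d) : (0 : ℝ) < 1 / ((T.1 i : ℕ) + 3 : ℝ) := by positivity
  refine ⟨fun i ↦ 1 / 2 + bitSign (T.2 i) * (1 / ((T.1 i : ℕ) + 3 : ℝ)), ⟨?_, fun i ↦ ?_⟩, ?_⟩
  · intro i j hij
    simp only [centerDist, add_sub_cancel_left, abs_mul, abs_bitSign, one_mul, abs_of_pos (hpos _)]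
    gcongr
    exact hij
  · rw [add_sub_cancel_left, ← mul_assoc, bitSign_mul_self, one_mul]
    exact hpos i
  · intro i _
    have hlt : |bitSign (T.2 i) * (1 / ((T.1 i : ℕ) + 3 : ℝ))| < 1 / 2 := by
      rw [abs_mul, abs_bitSign, one_mul, abs_of_pos (hpos i)]
      exact one_div_lt_one_div_of_lt two_pos (by linarith [Nat.cast_nonneg (α := ℝ) (T.1 i : ℕ)])
    rw [abs_lt] at hlt
    constructor <;> linarith

theorem volume_real_sector_pos (T : SectorIndex d) : 0 < volume.real (sector T ∩ unitCube d) := by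
  have hopen : IsOpen (sector T ∩ univ.pi fun _ ↦ Ioo 0 1) :=
    (isOpen_sector T).inter (isOpen_set_pi finite_univ fun _ _ ↦ isOpen_Ioo)
  refine ENNReal.toReal_pos ?_ (measure_ne_top_of_subset inter_subset_right (by
    simp [volume_unitCube]))
  exact ((hopen.measure_pos volume (sector_inter_pi_Ioo_nonempty T)).trans_le (measure_mono
    (inter_subset_inter_right _ (pi_mono fun _ _ ↦ Ioo_subset_Ico_self)))).ne'

theorem setIntegral_unitCube_eq_sum {E : Type*} [NormedAddCommGroup E] [NormedSpace ℝ E]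
    [CompleteSpace E] {g : (Fin d → ℝ) → E} {v : SectorIndex d → E}
    (hg : ∀ T, EqOn g (fun _ ↦ v T) (sector T)) :
    ∫ u in unitCube d, g u = ∑ T, volume.real (sector T ∩ unitCube d) • v T := by
  have hae : unitCube d =ᵐ[volume] ⋃ T : SectorIndex d, sector T ∩ unitCube d := by
    filter_upwards [ae_exists_mem_sector d] with u hu
    rw [← iUnion_inter]
    exact propext (and_iff_right (mem_iUnion.2 hu)).symm
  have hmeas (T : SectorIndex d) : MeasurableSet (sector T ∩ unitCube d) :=
    (isOpen_sector T).measurableSet.inter (measurableSet_unitCube d)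
  have hconst (T : SectorIndex d) : EqOn g (fun _ ↦ v T) (sector T ∩ unitCube d) :=
    (hg T).mono inter_subset_left
  rw [setIntegral_congr_set hae, integral_iUnion_fintype hmeas]
  · exact Finset.sum_congr rfl fun T _ ↦ by
      rw [setIntegral_congr_fun (hmeas T) (hconst T), setIntegral_const]
  · exact (pairwise_disjoint_sector d).mono fun T T' h ↦
      h.mono inter_subset_left inter_subset_left
  · intro T
    rw [integrableOn_congr_fun (hconst T) (hmeas T)]
    exact integrableOn_const (measure_ne_top_of_subset inter_subset_right (by
      simp [volume_unitCube]))

end Sectors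

section CellAverage

open scoped Matrix

variable {d : ℕ} {A : Matrix (Fin d) (Fin d) ℝ} {ε : ℝ} {T : SectorIndex d} {u : Fin d → ℝ}

theorem cubeInterp_eq_of_mem_sector (hu : u ∈ sector T) (f : (Fin d → Bool) → ℝ) :
    cubeInterp d f u = barycenterValue T 0 f + ∑ i, sectorSlope T i f * (u i - 1 / 2) := by
  rw [cubeInterp_eq_chainSum d f u (centerDist_injective_of_mem_sector hu)
    (centerDist_pos_of_mem_sector hu), chainSum, nearestCorner_eq_of_mem_sector hu]
  have hbary : barycenterValue T 0 f = faceAverage ∅ T.2 f := by simp [barycenterValue]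
  rw [hbary]
  refine congrArg _ (Finset.sum_congr rfl fun i _ ↦ ?_)
  have hle : {j | centerDist u i ≤ centerDist u j} = {l | (T.1 l : ℕ) < T.1 i + 1} := by
    ext j
    simp only [mem_ofPred_eq, ← not_lt, centerDist_lt_iff_of_mem_sector hu, Fin.lt_def]
    omega
  have hlt : {j | centerDist u i < centerDist u j} = {l | (T.1 l : ℕ) < T.1 i} := by
    ext j
    simp only [mem_ofPred_eq, centerDist_lt_iff_of_mem_sector hu, Fin.lt_def]
  rw [hle, hlt, ← bitSign_nearestCorner_mul_sub u i, nearestCorner_eq_of_mem_sector hu]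
  simp only [sectorSlope, barycenterValue, LinearMap.smul_apply, LinearMap.sub_apply, smul_eq_mul]
  ring

theorem sectorSlope_const (T : SectorIndex d) (i : Fin d) (c : ℝ) :
    sectorSlope T i (fun _ ↦ c) = 0 := by
  simp [sectorSlope, barycenterValue, faceAverage_apply]

theorem perpTrans_dgrad (A : Matrix (Fin d) (Fin d) ℝ) (ε : ℝ) (ρ : Fin d → ℝ)
    (y : (Fin d → ℝ) → Fin d → ℝ) (k : Fin d → ℤ) : PerpTrans (dgrad d A ε ρ y k) := by
  intro j
  simp only [dgrad, ← Finset.sum_div, Finset.sum_sub_distrib]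
  simp

theorem sectorSlope_dgrad (A : Matrix (Fin d) (Fin d) ℝ) (ε : ℝ) (ρ : Fin d → ℝ)
    (y : (Fin d → ℝ) → Fin d → ℝ) (k : Fin d → ℤ) (T : SectorIndex d) (i j : Fin d) :
    sectorSlope T i (dgrad d A ε ρ y k j) =
      ε⁻¹ * sectorSlope T i fun b ↦ y (cellCorner d A ε ρ k b) j := by
  have hdgrad : dgrad d A ε ρ y k j = ε⁻¹ • ((fun b ↦ y (cellCorner d A ε ρ k b) j) -
      fun _ ↦ (∑ b, y (cellCorner d A ε ρ k b) j) / 2 ^ d) := by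
    ext b
    simp [dgrad, div_eq_inv_mul]
  rw [hdgrad, map_smul, map_sub, sectorSlope_const, sub_zero, smul_eq_mul]

theorem latPt_eq_add (A : Matrix (Fin d) (Fin d) ℝ) (ε : ℝ) (ρ : Fin d → ℝ) (k : Fin d → ℤ)
    (u : Fin d → ℝ) :
    latPt d A ε ρ k u = (ε • A) *ᵥ (fun i ↦ ρ i + (k i : ℝ)) + (ε • A) *ᵥ u := by
  rw [latPt, ← Matrix.mulVec_add, Matrix.smul_mulVec]
  rfl

theorem isUnit_det_smul {n K : Type*} [Fintype n] [DecidableEq n] [Field K] {M : Matrix n n K}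
    {c : K} (hM : M.det ≠ 0) (hc : c ≠ 0) : IsUnit (c • M).det := by
  rw [Matrix.det_smul]
  exact (mul_ne_zero (pow_ne_zero _ hc) hM).isUnit

theorem inv_mulVec_latPt (hA : A.det ≠ 0) (hε : ε ≠ 0) (ρ : Fin d → ℝ) (k : Fin d → ℤ)
    (u : Fin d → ℝ) :
    (fun i ↦ ((ε • A)⁻¹ *ᵥ latPt d A ε ρ k u) i - ρ i - k i) = u := by
  ext i
  rw [latPt_eq_add, ← Matrix.mulVec_add, Matrix.mulVec_mulVec,
    Matrix.nonsing_inv_mul _ (isUnit_det_smul hA hε), Matrix.one_mulVec, Pi.add_apply]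
  ring

theorem hasFDerivAt_mulVec {n : Type*} [Fintype n] [DecidableEq n] (M : Matrix n n ℝ) (x : n → ℝ) :
    HasFDerivAt (fun x ↦ M *ᵥ x) (Matrix.toLin' M).toContinuousLinearMap x :=
  (Matrix.toLin' M).toContinuousLinearMap.hasFDerivAt

theorem hasFDerivAt_cubeInterp (hu : u ∈ sector T) (f : (Fin d → Bool) → ℝ) :
    HasFDerivAt (cubeInterp d f) (∑ i, sectorSlope T i f •
      ContinuousLinearMap.proj (R := ℝ) (φ := fun _ : Fin d ↦ ℝ) i) u := by
  have heq : cubeInterp d f =ᶠ[nhds u]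
      fun u ↦ barycenterValue T 0 f + ∑ i, sectorSlope T i f * (u i - 1 / 2) := by
    filter_upwards [(isOpen_sector T).mem_nhds hu] with v hv
    exact cubeInterp_eq_of_mem_sector hv f
  refine HasFDerivAt.congr_of_eventuallyEq ?_ heq
  exact (HasFDerivAt.fun_sum fun i _ ↦
    ((hasFDerivAt_apply i u).sub_const _).const_mul (sectorSlope T i f)).const_add _

theorem gradM_cellInterp_latPt (hA : A.det ≠ 0) (hε : ε ≠ 0) (ρ : Fin d → ℝ)
    (y : (Fin d → ℝ) → Fin d → ℝ) (k : Fin d → ℤ) (hu : u ∈ sector T) :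
    gradM d (cellInterp d A ε ρ y k) (latPt d A ε ρ k u) =
      Matrix.of.symm (sectorGrad A T (Matrix.of (dgrad d A ε ρ y k))) := by
  have hcoord : HasFDerivAt (fun x i ↦ ((ε • A)⁻¹ *ᵥ x) i - ρ i - k i)
      (Matrix.toLin' (ε • A)⁻¹).toContinuousLinearMap (latPt d A ε ρ k u) :=
    ((hasFDerivAt_mulVec _ _).sub_const ρ).sub_const fun i ↦ (k i : ℝ)
  rw [← inv_mulVec_latPt hA hε ρ k u] at hu
  have hderiv : HasFDerivAt (cellInterp d A ε ρ y k) _ (latPt d A ε ρ k u) :=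
    hasFDerivAt_pi.2 fun j ↦
      (hasFDerivAt_cubeInterp hu fun b ↦ y (cellCorner d A ε ρ k b) j).comp _ hcoord
  have hinv : (ε • A)⁻¹ = ε⁻¹ • A⁻¹ := Matrix.inv_smul' A (Units.mk0 ε hε) hA.isUnit
  have hslope (j i : Fin d) : refGrad T (Matrix.of (dgrad d A ε ρ y k)) j i =
      ε⁻¹ * sectorSlope T i fun b ↦ y (cellCorner d A ε ρ k b) j :=
    sectorSlope_dgrad A ε ρ y k T i j
  ext j i
  rw [gradM, hderiv.fderiv]
  simp [hinv, sectorGrad_apply, Matrix.mul_apply, hslope, Finset.mul_sum, mul_assoc]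

theorem cellRegion_eq_image (A : Matrix (Fin d) (Fin d) ℝ) (ε : ℝ) (ρ : Fin d → ℝ)
    (k : Fin d → ℤ) : cellRegion d A ε ρ k = latPt d A ε ρ k '' unitCube d := by
  ext x
  simp only [cellRegion, unitCube, mem_ofPred_eq, mem_image, mem_univ_pi, eq_comm]

theorem setIntegral_cellRegion {E : Type*} [NormedAddCommGroup E] [NormedSpace ℝ E]
    (hA : A.det ≠ 0) (hε : ε ≠ 0) (ρ : Fin d → ℝ) (k : Fin d → ℤ) (g : (Fin d → ℝ) → E) :
    ∫ x in cellRegion d A ε ρ k, g x =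
      |(ε • A).det| • ∫ u in unitCube d, g (latPt d A ε ρ k u) := by
  have hderiv (u : Fin d → ℝ) : HasFDerivAt (latPt d A ε ρ k)
      (Matrix.toLin' (ε • A)).toContinuousLinearMap u :=
    ((hasFDerivAt_mulVec _ u).const_add _).congr_of_eventuallyEq
      (.of_forall (latPt_eq_add A ε ρ k))
  have hinj : (latPt d A ε ρ k).Injective := fun u v huv ↦ by
    rw [← inv_mulVec_latPt hA hε ρ k u, huv, inv_mulVec_latPt hA hε ρ k v]
  rw [cellRegion_eq_image, integral_image_eq_integral_abs_det_fderiv_smul volume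
    (measurableSet_unitCube d) (fun u _ ↦ (hderiv u).hasFDerivWithinAt) hinj.injOn,
    LinearMap.det_toContinuousLinearMap, LinearMap.det_toLin', integral_smul]

theorem volume_real_cellRegion (hA : A.det ≠ 0) (hε : ε ≠ 0) (ρ : Fin d → ℝ) (k : Fin d → ℤ) :
    volume.real (cellRegion d A ε ρ k) = |(ε • A).det| := by
  have h := setIntegral_cellRegion hA hε ρ k fun _ ↦ (1 : ℝ)
  simpa [measureReal_def, volume_unitCube] using h

theorem setAverage_cellRegion_eq_sum {E : Type*} [NormedAddCommGroup E] [NormedSpace ℝ E]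
    [CompleteSpace E] (hA : A.det ≠ 0) (hε : ε ≠ 0) (ρ : Fin d → ℝ)
    (y : (Fin d → ℝ) → Fin d → ℝ) (k : Fin d → ℤ) (φ : (Fin d → Fin d → ℝ) → E) :
    ⨍ x in cellRegion d A ε ρ k, φ (gradM d (cellInterp d A ε ρ y k) x) =
      ∑ T, volume.real (sector T ∩ unitCube d) •
        φ (Matrix.of.symm (sectorGrad A T (Matrix.of (dgrad d A ε ρ y k)))) := by
  rw [setAverage_eq, volume_real_cellRegion hA hε, setIntegral_cellRegion hA hε, smul_smul,
    inv_mul_cancel₀ (abs_ne_zero.2 (isUnit_det_smul hA hε).ne_zero), one_smul]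
  exact setIntegral_unitCube_eq_sum fun T u hu ↦
    congrArg φ (gradM_cellInterp_latPt hA hε ρ y k hu)

end CellAverage

theorem interpolation_norm_equivalence_general {d : ℕ} {A : Matrix (Fin d) (Fin d) ℝ}
    (hA : A.det ≠ 0) {p : ℝ} (hp : 0 ≤ p) :
    ∃ c > 0, ∃ C > 0, ∀ ε : ℝ, ε ≠ 0 → ∀ (ρ : Fin d → ℝ) (y : (Fin d → ℝ) → Fin d → ℝ)
      (k : Fin d → ℤ),
      c * distSObar d A (dgrad d A ε ρ y k) ^ p ≤
          ⨍ x in cellRegion d A ε ρ k, distSO d (gradM d (cellInterp d A ε ρ y k) x) ^ p ∧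
        ⨍ x in cellRegion d A ε ρ k, distSO d (gradM d (cellInterp d A ε ρ y k) x) ^ p ≤
          C * distSObar d A (dgrad d A ε ρ y k) ^ p ∧
        c * mnorm (dgrad d A ε ρ y k) ^ p ≤
          ⨍ x in cellRegion d A ε ρ k, sqnorm d (gradM d (cellInterp d A ε ρ y k) x) ^ p ∧
        ⨍ x in cellRegion d A ε ρ k, sqnorm d (gradM d (cellInterp d A ε ρ y k) x) ^ p ≤
          C * mnorm (dgrad d A ε ρ y k) ^ p := by
  obtain ⟨K₁, hK₁, hdistSObar⟩ := exists_distSObar_le_mul_distSO hA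
  obtain ⟨K₂, hK₂, hdistSO⟩ := exists_distSO_le_mul_distSObar hA
  obtain ⟨K₃, hK₃, hmnorm⟩ := exists_mnorm_le_mul_sqnorm hA
  obtain ⟨K₄, hK₄, hsqnorm⟩ := exists_sqnorm_le_mul_mnorm A
  have hvolume := volume_real_sector_pos (d := d)
  obtain ⟨c₁, hc₁, hdist_lower⟩ := exists_mul_rpow_le_sum hvolume hp hK₁
  obtain ⟨C₁, hC₁, hdist_upper⟩ := exists_sum_le_mul_rpow hvolume hp hK₂
  obtain ⟨c₂, hc₂, hnorm_lower⟩ := exists_mul_rpow_le_sum hvolume hp hK₃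
  obtain ⟨C₂, -, hnorm_upper⟩ := exists_sum_le_mul_rpow hvolume hp hK₄
  refine ⟨min c₁ c₂, lt_min hc₁ hc₂, max C₁ C₂, lt_max_of_lt_left hC₁, fun ε hε ρ y k ↦ ?_⟩
  rw [setAverage_cellRegion_eq_sum hA hε ρ y k fun F ↦ distSO d F ^ p,
    setAverage_cellRegion_eq_sum hA hε ρ y k fun F ↦ sqnorm d F ^ p]
  have hG := perpTrans_dgrad A ε ρ y k
  set G := dgrad d A ε ρ y k
  have hdist₀ := distSObar_nonneg A G
  have hnorm₀ : 0 ≤ mnorm G := Real.sqrt_nonneg _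
  refine ⟨?_, ?_, ?_, ?_⟩
  · exact (mul_le_mul_of_nonneg_right (min_le_left _ _) (Real.rpow_nonneg hdist₀ p)).trans
      (hdist_lower _ _ hdist₀ (fun _ ↦ distSO_nonneg _) (hdistSObar G hG))
  · exact (hdist_upper _ _ hdist₀ (fun _ ↦ distSO_nonneg _) (hdistSO G)).trans
      (mul_le_mul_of_nonneg_right (le_max_left _ _) (Real.rpow_nonneg hdist₀ p))
  · exact (mul_le_mul_of_nonneg_right (min_le_right _ _) (Real.rpow_nonneg hnorm₀ p)).trans
      (hnorm_lower _ _ hnorm₀ (fun _ ↦ Real.sqrt_nonneg _) (hmnorm G hG))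
  · exact (hnorm_upper _ _ hnorm₀ (fun _ ↦ Real.sqrt_nonneg _) (hsqnorm G)).trans
      (mul_le_mul_of_nonneg_right (le_max_right _ _) (Real.rpow_nonneg hnorm₀ p))

/-- Norm equivalence for the piecewise affine interpolation on intact cells:
for every `1 ≤ p < ∞` there are constants `c, C > 0` depending only on `p`, `d` and `A` such
that the mean of `dist^p(∇ỹ, SO(d))` (resp. `|∇ỹ|^p`) over a cell is comparable to
`dist^p(∇̄y, SO̅(d))` (resp. `|∇̄y|^p`). -/
theorem interpolation_norm_equivalence
    (d : ℕ) (hd : 2 ≤ d) (A : Matrix (Fin d) (Fin d) ℝ) (hA : 0 < A.det)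
    (p : ℝ) (hp : 1 ≤ p) :
    ∃ c > (0 : ℝ), ∃ C > (0 : ℝ), ∀ ε : ℝ, 0 < ε → ∀ Cint : ℝ, 1 ≤ Cint →
      ∀ y : (Fin d → ℝ) → Fin d → ℝ, ∀ k : Fin d → ℤ, IntactCell d A ε 0 Cint y k →
        (c * distSObar d A (dgrad d A ε 0 y k) ^ p ≤
          (1 / (ε ^ d * A.det)) *
            ∫ x in cellRegion d A ε 0 k, distSO d (gradM d (cellInterp d A ε 0 y k) x) ^ p) ∧
        ((1 / (ε ^ d * A.det)) *
            ∫ x in cellRegion d A ε 0 k, distSO d (gradM d (cellInterp d A ε 0 y k) x) ^ p ≤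
          C * distSObar d A (dgrad d A ε 0 y k) ^ p) ∧
        (c * mnorm (dgrad d A ε 0 y k) ^ p ≤
          (1 / (ε ^ d * A.det)) *
            ∫ x in cellRegion d A ε 0 k, sqnorm d (gradM d (cellInterp d A ε 0 y k) x) ^ p) ∧
        ((1 / (ε ^ d * A.det)) *
            ∫ x in cellRegion d A ε 0 k, sqnorm d (gradM d (cellInterp d A ε 0 y k) x) ^ p ≤
          C * mnorm (dgrad d A ε 0 y k) ^ p) := by
  obtain ⟨c, hc, C, hC, h⟩ := interpolation_norm_equivalence_general hA.ne' (zero_le_one.trans hp)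
  refine ⟨c, hc, C, hC, fun ε hε Cint _ y k _ ↦ ?_⟩
  have hmean (g : (Fin d → ℝ) → ℝ) : (1 / (ε ^ d * A.det)) * ∫ x in cellRegion d A ε 0 k, g x =
      ⨍ x in cellRegion d A ε 0 k, g x := by
    rw [setAverage_eq, volume_real_cellRegion hA.ne' hε.ne', Matrix.det_smul, Fintype.card_fin,
      abs_of_pos (by positivity), smul_eq_mul, one_div]
  simp only [hmean]
  exact h ε hε.ne' 0 y k

end Cleavage
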